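/- Let U be an N × N random unitary matrix distributed according to Haar measure on U(N). For all sufficiently large N, if I ⊆ [0, 2π) is any arc (interval) of length N^{-1/2}, then P[ μ_N(I) − ν(I) > Var(𝒩_I)/(256 N) ] ≥ exp(−(5/2¹⁹) · log(e³ N)). -/

import Mathlib

open MeasureTheory Real Filter

noncomputable section

/-- The Borel σ-algebra on the unitary group `U(N)`. -/
instance (N : ℕ) : MeasurableSpace (Matrix.unitaryGroup (Fin N) ℂ) := borel _

instance (N : ℕ) : BorelSpace (Matrix.unitaryGroup (Fin N) ℂ) := ⟨rfl⟩

/-- The eigenvalue angles (in `[0, 2π)`, with multiplicity) of a unitary matrix `U`: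
the arguments of the roots of the characteristic polynomial, shifted to lie in `[0, 2π)`. -/
def eigenAngles (N : ℕ) (U : Matrix.unitaryGroup (Fin N) ℂ) : Multiset ℝ :=
  ((U : Matrix (Fin N) (Fin N) ℂ).charpoly.roots).map
    (fun z => if 0 ≤ Complex.arg z then Complex.arg z else Complex.arg z + 2 * π)

open Classical in
/-- `𝒩_A`: the number of eigenvalue angles of `U` lying in the set `A`. -/
def countAngles (N : ℕ) (U : Matrix.unitaryGroup (Fin N) ℂ) (A : Set ℝ) : ℕ :=
  Multiset.card ((eigenAngles N U).filter (· ∈ A))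

/-- `𝒩_θ`: the number of eigenvalue angles of `U` in `[0, θ]`. -/
def countFun (N : ℕ) (U : Matrix.unitaryGroup (Fin N) ℂ) (θ : ℝ) : ℕ :=
  countAngles N U (Set.Icc 0 θ)

/-- The Kolmogorov distance between the empirical spectral measure of `U` and the
uniform measure on the circle: `sup_{0 ≤ θ < 2π} |𝒩_θ/N - θ/(2π)|`. -/
def dK (N : ℕ) (U : Matrix.unitaryGroup (Fin N) ℂ) : ℝ :=
  ⨆ θ : Set.Ico (0:ℝ) (2 * π), |(countFun N U θ : ℝ) / N - (θ : ℝ) / (2 * π)|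

/-- `max_{1 ≤ k ≤ N} |𝒩_{2πk/N} - k|`. -/
def maxDev (N : ℕ) (U : Matrix.unitaryGroup (Fin N) ℂ) : ℝ :=
  ⨆ k : (Finset.Icc 1 N : Finset ℕ), |(countFun N U (2 * π * (k : ℕ) / N) : ℝ) - ((k : ℕ) : ℝ)|

end

/-
Differentiating along left translations of Haar measure on `U(N)` gives Schwinger–Dyson equations
for the weight `det(U)⁻ᵇ ∏ᵢ det(xᵢ - U)`. Multiplied by the Vandermonde determinant `V(x)`, the
expectation of this weight is an alternating polynomial in `x`, and the quadratic equation makes it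
an eigenfunction of a Casimir operator that acts on each monomial by a scalar. Only the monomials of
a single alternant carry the right eigenvalue, so the expectation is known up to a constant, and the
Jacobi–Trudi formula turns it into a Toeplitz determinant. By density this yields the Heine–Szegő
identity `E ∏ⱼ f(θⱼ) = det (f̂(r - j))`.

For `f = 1 + s 1_I` it reads `E (1 + s) ^ 𝒩_I = ∏ᵢ (1 + s wᵢ)`, where `wᵢ ∈ [0, 1]` are the
eigenvalues of the Toeplitz matrix of `1_I`. Thus `𝒩_I` is distributed as a sum of independent
Bernoulli variables, with variance `tr T - tr T²`, which for arcs of length `N^{-1/2}` is bounded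
below and is at most `2 + log N / π²`. Two-sided bounds on its exponential moments, fed into the
Paley–Zygmund inequality, give the lower bound on the tail.
-/

namespace HaarUnitary

open Matrix Polynomial

section OneParameterSubgroup

variable {G : Type*} [TopologicalSpace G] [CompactSpace G] [MeasurableSpace G] [BorelSpace G]

theorem integrable_of_continuous {f : G → ℂ} (hf : Continuous f) (μ : Measure G)
    [IsFiniteMeasure μ] : Integrable f μ :=
  hf.integrable_of_hasCompactSupport (.of_compactSpace f)

theorem integral_deriv_orbit_eq_zero [Group G] [IsTopologicalGroup G] (μ : Measure G)
    [IsFiniteMeasure μ] [μ.IsMulLeftInvariant] {γ : ℝ → G} (hγ : ∀ s t, γ (s + t) = γ s * γ t)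
    {f f' : G → ℂ} (hf : Continuous f) (hf' : Continuous f')
    (hderiv : ∀ g, HasDerivAt (fun t => f (γ t * g)) (f' g) 0) : ∫ g, f' g ∂μ = 0 := by
  obtain ⟨C, hC⟩ := (isCompact_range hf').isBounded.exists_norm_le
  have hderiv_all (g : G) (t : ℝ) : HasDerivAt (fun s => f (γ s * g)) (f' (γ t * g)) t := by
    have h := HasDerivAt.comp_sub_const t t (f := fun s => f (γ s * (γ t * g)))
      (by simpa using hderiv (γ t * g))
    simpa only [← mul_assoc, ← hγ, sub_add_cancel] using h
  have hγ₀ : γ 0 = 1 := by simpa using hγ 0 0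
  have hint (t : ℝ) : Integrable (fun g => f (γ t * g)) μ :=
    integrable_of_continuous (by fun_prop) μ
  have hderiv_int := (hasDerivAt_integral_of_dominated_loc_of_deriv_le (μ := μ) (x₀ := (0 : ℝ))
    (F := fun t g => f (γ t * g)) (F' := fun t g => f' (γ t * g)) (bound := fun _ => C)
    univ_mem (.of_forall fun t => (hint t).aestronglyMeasurable) (hint 0)
    (integrable_of_continuous (by fun_prop) μ).aestronglyMeasurable
    (.of_forall fun g t _ => hC _ ⟨_, rfl⟩) (integrable_const C)
    (.of_forall fun g t _ => hderiv_all g t)).2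
  simp only [integral_mul_left_eq_self, hγ₀, one_mul] at hderiv_int
  exact hderiv_int.unique (hasDerivAt_const _ _)

end OneParameterSubgroup

section HaarIntegrationByParts

open scoped Matrix.Norms.L2Operator

variable {N : ℕ}

instance compactSpace_unitaryGroup : CompactSpace (unitaryGroup (Fin N) ℂ) := by
  refine isCompact_iff_compactSpace.mp
    (Metric.isCompact_of_isClosed_isBounded (isClosed_unitary (R := Matrix (Fin N) (Fin N) ℂ)) ?_)
  refine (Metric.isBounded_closedBall (x := 0) (r := 1)).subset fun U hU => ?_
  cases subsingleton_or_nontrivial (Matrix (Fin N) (Fin N) ℂ)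
  · simp [Subsingleton.elim U 0]
  · simpa using (CStarRing.norm_of_mem_unitary hU).le

theorem continuous_fderiv_mul {Φ : Matrix (Fin N) (Fin N) ℂ → ℂ}
    (hΦ : ∀ U : unitaryGroup (Fin N) ℂ, ContDiffAt ℂ 1 Φ U) (X : Matrix (Fin N) (Fin N) ℂ) :
    Continuous fun U : unitaryGroup (Fin N) ℂ => fderiv ℂ Φ U (X * U) := by
  refine continuous_iff_continuousAt.mpr fun U => ?_
  have h := ((hΦ U).continuousAt_fderiv one_ne_zero).comp
    (f := fun V : unitaryGroup (Fin N) ℂ => (V : Matrix (Fin N) (Fin N) ℂ))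
    continuousAt_subtype_val
  exact h.clm_apply (by fun_prop)

theorem integral_fderiv_selfAdjoint_mul_eq_zero (ℙ : Measure (unitaryGroup (Fin N) ℂ))
    [IsFiniteMeasure ℙ] [ℙ.IsMulLeftInvariant] {Φ : Matrix (Fin N) (Fin N) ℂ → ℂ}
    (hΦ : ∀ U : unitaryGroup (Fin N) ℂ, ContDiffAt ℂ 1 Φ U)
    (H : selfAdjoint (Matrix (Fin N) (Fin N) ℂ)) :
    ∫ U : unitaryGroup (Fin N) ℂ, fderiv ℂ Φ U (H * U) ∂ℙ = 0 := by
  have hcont : Continuous fun U : unitaryGroup (Fin N) ℂ => Φ U :=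
    continuous_iff_continuousAt.mpr fun U => (hΦ U).continuousAt.comp continuousAt_subtype_val
  have hderiv (U : unitaryGroup (Fin N) ℂ) : HasDerivAt
      (fun t : ℝ => Φ (selfAdjoint.expUnitary (t • H) * U : unitaryGroup (Fin N) ℂ))
      (fderiv ℂ Φ U (Complex.I • H * U)) 0 := by
    have hcurve : HasDerivAt
        (fun t : ℝ => NormedSpace.exp (t • Complex.I • (H : Matrix (Fin N) (Fin N) ℂ)) * U)
        (Complex.I • H * U) 0 := by
      simpa using (hasDerivAt_exp_smul_const (𝕂 := ℝ) (Complex.I • (H : Matrix _ _ ℂ))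
        0).mul_const (U : Matrix (Fin N) (Fin N) ℂ)
    have hfderiv := ((hΦ U).differentiableAt one_ne_zero).hasFDerivAt.restrictScalars ℝ
    refine (hfderiv.comp_hasDerivAt_of_eq (0 : ℝ) hcurve (by simp)).congr_of_eventuallyEq
      (.of_forall fun t => ?_)
    simp [selfAdjoint.expUnitary, smul_comm t]
  have hint := integral_deriv_orbit_eq_zero ℙ (γ := fun t => selfAdjoint.expUnitary (t • H))
    (fun s t => by
      rw [add_smul, Commute.expUnitary_add]
      exact ((Commute.refl _).smul_left s).smul_right t)
    hcont (continuous_fderiv_mul hΦ _) hderiv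
  simp only [smul_mul_assoc, map_smul, integral_smul] at hint
  exact (smul_eq_zero.mp hint).resolve_left Complex.I_ne_zero

-- Complex-linearity in `X` extends the identity from the Lie algebra `𝔲(N)` to `𝔤𝔩(N, ℂ)`.
theorem integral_fderiv_mul_eq_zero (ℙ : Measure (unitaryGroup (Fin N) ℂ))
    [IsFiniteMeasure ℙ] [ℙ.IsMulLeftInvariant] {Φ : Matrix (Fin N) (Fin N) ℂ → ℂ}
    (hΦ : ∀ U : unitaryGroup (Fin N) ℂ, ContDiffAt ℂ 1 Φ U) (X : Matrix (Fin N) (Fin N) ℂ) :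
    ∫ U : unitaryGroup (Fin N) ℂ, fderiv ℂ Φ U (X * U) ∂ℙ = 0 := by
  have hsplit (U : unitaryGroup (Fin N) ℂ) : fderiv ℂ Φ U (X * U) =
      fderiv ℂ Φ U (realPart X * U) + Complex.I * fderiv ℂ Φ U (imaginaryPart X * U) := by
    conv_lhs => rw [← realPart_add_I_smul_imaginaryPart X, add_mul, map_add, smul_mul_assoc,
      map_smul, smul_eq_mul]
  have hint (Y : Matrix (Fin N) (Fin N) ℂ) :=
    integrable_of_continuous (continuous_fderiv_mul hΦ Y) ℙ
  simp only [hsplit]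
  rw [integral_add (hint _) ((hint _).const_mul _), integral_const_mul,
    integral_fderiv_selfAdjoint_mul_eq_zero ℙ hΦ, integral_fderiv_selfAdjoint_mul_eq_zero ℙ hΦ,
    mul_zero, add_zero]

end HaarIntegrationByParts

theorem hasDerivAt_finsetProd_of_logDeriv {ι 𝕜 : Type*} [NontriviallyNormedField 𝕜]
    {s : Finset ι} {f : ι → 𝕜 → 𝕜} {g : ι → 𝕜} {t : 𝕜}
    (hf : ∀ i ∈ s, HasDerivAt (f i) (f i t * g i) t) :
    HasDerivAt (fun u => ∏ i ∈ s, f i u) ((∏ i ∈ s, f i t) * ∑ i ∈ s, g i) t := by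
  classical
  refine (HasDerivAt.fun_finsetProd hf).congr_deriv ?_
  rw [Finset.mul_sum]
  refine Finset.sum_congr rfl fun i hi => ?_
  rw [smul_eq_mul, ← mul_assoc, Finset.prod_erase_mul _ _ hi]

section MatrixCalculus

variable {m : Type*} [Fintype m] [DecidableEq m]

theorem hasDerivAt_det {𝕜 : Type*} [NontriviallyNormedField 𝕜] {M : 𝕜 → Matrix m m 𝕜}
    {M' : Matrix m m 𝕜} {t : 𝕜} (hM : ∀ i j, HasDerivAt (fun s => M s i j) (M' i j) t) :
    HasDerivAt (fun s => (M s).det) ((M t).adjugate * M').trace t := by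
  have hderiv : HasDerivAt (fun s => (M s).det)
      (∑ σ : Equiv.Perm m, (Equiv.Perm.sign σ : ℤ) •
        ∑ i, (∏ j ∈ Finset.univ.erase i, M t (σ j) j) • M' (σ i) i) t := by
    simp only [det_apply]
    exact .fun_sum fun σ _ =>
      (HasDerivAt.fun_finsetProd fun i _ => hM (σ i) i).const_smul (Equiv.Perm.sign σ : ℤ)
  refine hderiv.congr_deriv ?_
  have htrace : ((M t).adjugate * M').trace = ∑ i, ((M t).updateCol i fun j => M' j i).det :=
    Finset.sum_congr rfl fun i _ => by
      rw [← cramer_apply, cramer_eq_adjugate_mulVec]; rfl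
  simp only [htrace, det_apply, Finset.smul_sum]
  rw [Finset.sum_comm]
  refine Finset.sum_congr rfl fun i _ => Finset.sum_congr rfl fun σ _ => ?_
  rw [← Finset.prod_erase_mul _ _ (Finset.mem_univ i), updateCol_self, smul_eq_mul]
  congr 2
  exact Finset.prod_congr rfl fun j hj => (updateCol_ne (Finset.ne_of_mem_erase hj)).symm

theorem hasDerivAt_det_of_ne_zero {𝕜 : Type*} [NontriviallyNormedField 𝕜] {M : 𝕜 → Matrix m m 𝕜}
    {M' : Matrix m m 𝕜} {t : 𝕜} (hM : ∀ i j, HasDerivAt (fun s => M s i j) (M' i j) t)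
    (hdet : (M t).det ≠ 0) :
    HasDerivAt (fun s => (M s).det) ((M t).det * ((M t)⁻¹ * M').trace) t := by
  refine (hasDerivAt_det hM).congr_deriv ?_
  rw [inv_def, smul_mul_assoc, trace_smul, smul_eq_mul, Ring.inverse_eq_inv',
    mul_inv_cancel_left₀ hdet]

open scoped Matrix.Norms.L2Operator

theorem hasDerivAt_matrix_inv {M : ℂ → Matrix m m ℂ} {M' : Matrix m m ℂ} {t : ℂ}
    (hM : HasDerivAt M M' t) (hdet : (M t).det ≠ 0) :
    HasDerivAt (fun s => (M s)⁻¹) (-((M t)⁻¹ * M' * (M t)⁻¹)) t := by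
  obtain ⟨u, hu⟩ := (isUnit_iff_isUnit_det _).mpr (isUnit_iff_ne_zero.mpr hdet)
  simp only [nonsing_inv_eq_ringInverse]
  refine ((hasFDerivAt_ringInverse (𝕜 := ℂ) u).comp_hasDerivAt_of_eq t hM hu).congr_deriv ?_
  simp [← hu]

theorem contDiff_matrix_apply (i j : m) : ContDiff ℂ 1 fun U : Matrix m m ℂ => U i j :=
  (LinearMap.toContinuousLinearMap (entryLinearMap ℂ ℂ i j)).contDiff

theorem contDiff_matrix_det : ContDiff ℂ 1 (det : Matrix m m ℂ → ℂ) := by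
  simp only [_root_.funext det_apply, Units.smul_def]
  exact .sum fun σ _ => (contDiff_prod fun i _ => contDiff_matrix_apply _ _).const_smul _

theorem contDiffAt_matrix_inv {U : Matrix m m ℂ} (hU : U.det ≠ 0) :
    ContDiffAt ℂ 1 (fun U : Matrix m m ℂ => U⁻¹) U := by
  obtain ⟨u, rfl⟩ := (isUnit_iff_isUnit_det _).mpr (isUnit_iff_ne_zero.mpr hU)
  simpa only [nonsing_inv_eq_ringInverse] using contDiffAt_ringInverse ℂ u

end MatrixCalculus

section SchwingerDyson

variable {ι m : Type*} [Fintype ι] [Fintype m] [DecidableEq m]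

/-- The logarithmic gradient `-U (x - U)⁻¹` of `U ↦ det (x - U)` for right-invariant vector fields:
the derivative of `log det (x - U)` in the direction `X U` is the trace of its product with `X`. -/
noncomputable def charLogGrad (x : ℂ) (U : Matrix m m ℂ) : Matrix m m ℂ :=
  1 - x • (scalar m x - U)⁻¹

/-- The product `det(U)⁻ᵇ ∏ᵢ det(xᵢ - U)`, whose Haar integral generates the moments of secular
coefficients. -/
noncomputable def charWeight (b : ℕ) (x : ι → ℂ) (U : Matrix m m ℂ) : ℂ :=
  U.det⁻¹ ^ b * ∏ i, (scalar m (x i) - U).det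

/-- The logarithmic gradient of `charWeight b x`, normalised as `charLogGrad`. -/
noncomputable def charWeightLogGrad (b : ℕ) (x : ι → ℂ) (U : Matrix m m ℂ) : Matrix m m ℂ :=
  ∑ i, charLogGrad (x i) U - (b : ℂ) • 1

theorem charLogGrad_eq_neg_mul {x : ℂ} {U : Matrix m m ℂ} (h : (scalar m x - U).det ≠ 0) :
    charLogGrad x U = -(U * (scalar m x - U)⁻¹) := by
  have hinv : (scalar m x - U) * (scalar m x - U)⁻¹ = 1 :=
    mul_nonsing_inv _ (isUnit_iff_ne_zero.mpr h)
  rw [sub_mul, scalar_apply, ← smul_one_eq_diagonal, smul_mul_assoc, one_mul] at hinv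
  rw [charLogGrad, scalar_apply, ← smul_one_eq_diagonal, sub_eq_iff_eq_add.mp hinv,
    sub_add_cancel_left]

open scoped Matrix.Norms.L2Operator

theorem hasDerivAt_charLogGrad {x : ℂ} {U : Matrix m m ℂ} (h : (scalar m x - U).det ≠ 0)
    (X : Matrix m m ℂ) :
    HasDerivAt (fun s : ℂ => charLogGrad x (U + s • (X * U)))
      ((1 - charLogGrad x U) * X * charLogGrad x U) 0 := by
  have hline : HasDerivAt (fun s : ℂ => scalar m x - (U + s • (X * U))) (-(X * U)) 0 := by
    simpa using (((hasDerivAt_id (0 : ℂ)).smul_const (X * U)).const_add U).const_sub (scalar m x)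
  refine (((hasDerivAt_matrix_inv hline (by simpa using h)).const_smul x).const_sub
    1).congr_deriv ?_
  rw [zero_smul, add_zero]
  nth_rw 2 [charLogGrad_eq_neg_mul h]
  rw [charLogGrad, sub_sub_cancel]
  simp only [mul_neg, neg_mul, neg_neg, smul_mul_assoc, mul_assoc]

theorem hasDerivAt_charWeight (b : ℕ) {x : ι → ℂ} {U : Matrix m m ℂ} (hU : U.det ≠ 0)
    (hx : ∀ i, (scalar m (x i) - U).det ≠ 0) (X : Matrix m m ℂ) :
    HasDerivAt (fun s : ℂ => charWeight b x (U + s • (X * U)))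
      (charWeight b x U * (charWeightLogGrad b x U * X).trace) 0 := by
  have hline (i j : m) : HasDerivAt (fun s : ℂ => (U + s • (X * U)) i j) ((X * U) i j) 0 := by
    simpa using ((hasDerivAt_id (0 : ℂ)).mul_const ((X * U) i j)).const_add (U i j)
  have hzero : U + (0 : ℂ) • (X * U) = U := by simp
  have hdet : HasDerivAt (fun s : ℂ => (U + s • (X * U)).det) (U.det * X.trace) 0 := by
    refine (hasDerivAt_det_of_ne_zero hline (by rwa [hzero])).congr_deriv ?_
    rw [hzero, trace_mul_comm, mul_assoc, mul_nonsing_inv _ (.mk0 _ hU), mul_one]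
  have hinv : HasDerivAt (fun s : ℂ => (U + s • (X * U)).det⁻¹)
      ((U + (0 : ℂ) • (X * U)).det⁻¹ * -X.trace) 0 := by
    refine (hdet.fun_inv (by rwa [hzero])).congr_deriv ?_
    rw [hzero]
    field_simp
  have hchar (i : ι) : HasDerivAt (fun s : ℂ => (scalar m (x i) - (U + s • (X * U))).det)
      ((scalar m (x i) - (U + (0 : ℂ) • (X * U))).det * (charLogGrad (x i) U * X).trace) 0 := by
    refine (hasDerivAt_det_of_ne_zero (M := fun s => scalar m (x i) - (U + s • (X * U)))
      (M' := -(X * U)) (fun k l => (hline k l).const_sub _)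
      (by rw [hzero]; exact hx i)).congr_deriv ?_
    rw [hzero, charLogGrad_eq_neg_mul (hx i), mul_neg, neg_mul, trace_neg, trace_neg,
      trace_mul_comm, mul_assoc, trace_mul_comm]
  refine ((hasDerivAt_finsetProd_of_logDeriv (s := Finset.range b) fun _ _ => hinv).mul
    (hasDerivAt_finsetProd_of_logDeriv (s := Finset.univ) fun i _ => hchar i)
    |>.congr_of_eventuallyEq (.of_forall fun s => ?_)).congr_deriv ?_
  · simp [charWeight]
  · simp only [hzero, charWeight, charWeightLogGrad, sub_mul, Finset.sum_mul, trace_sub, trace_sum,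
      Finset.prod_const, Finset.sum_const, Finset.card_range, smul_mul_assoc, one_mul, trace_smul,
      smul_eq_mul, nsmul_eq_mul]
    ring

theorem contDiffAt_charWeight (b : ℕ) {x : ι → ℂ} {U : Matrix m m ℂ} (hU : U.det ≠ 0) :
    ContDiffAt ℂ 1 (charWeight b x) U :=
  ((contDiff_matrix_det.contDiffAt.inv hU).pow b).mul
    (contDiffAt_prod fun _ _ =>
      (contDiff_matrix_det.comp (contDiff_const.sub contDiff_id)).contDiffAt)

theorem contDiffAt_charLogGrad {x : ℂ} {U : Matrix m m ℂ} (h : (scalar m x - U).det ≠ 0) :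
    ContDiffAt ℂ 1 (charLogGrad x) U :=
  contDiffAt_const.sub (((contDiffAt_matrix_inv h).comp U
    (contDiffAt_const.sub contDiffAt_id)).const_smul x)

theorem contDiffAt_charWeightLogGrad (b : ℕ) {x : ι → ℂ} {U : Matrix m m ℂ}
    (hx : ∀ i, (scalar m (x i) - U).det ≠ 0) : ContDiffAt ℂ 1 (charWeightLogGrad b x) U :=
  (ContDiffAt.sum fun i _ => contDiffAt_charLogGrad (hx i)).sub contDiffAt_const

theorem hasDerivAt_charWeightLogGrad (b : ℕ) {x : ι → ℂ} {U : Matrix m m ℂ}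
    (hx : ∀ i, (scalar m (x i) - U).det ≠ 0) (X : Matrix m m ℂ) :
    HasDerivAt (fun s : ℂ => charWeightLogGrad b x (U + s • (X * U)))
      (∑ i, (1 - charLogGrad (x i) U) * X * charLogGrad (x i) U) 0 :=
  (HasDerivAt.fun_sum fun i _ => hasDerivAt_charLogGrad (hx i) X).sub_const _

theorem contDiffAt_charWeight_mul_charWeightLogGrad (b : ℕ) {x : ι → ℂ} {U : Matrix m m ℂ}
    (hU : U.det ≠ 0) (hx : ∀ i, (scalar m (x i) - U).det ≠ 0) (k l : m) :
    ContDiffAt ℂ 1 (fun V => charWeight b x V * charWeightLogGrad b x V k l) U :=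
  (contDiffAt_charWeight b hU).mul
    ((contDiff_matrix_apply k l).contDiffAt.comp U (contDiffAt_charWeightLogGrad b hx))

theorem fderiv_charWeight_mul_charWeightLogGrad (b : ℕ) {x : ι → ℂ} {U : Matrix m m ℂ}
    (hU : U.det ≠ 0) (hx : ∀ i, (scalar m (x i) - U).det ≠ 0) (k l : m) :
    fderiv ℂ (fun V => charWeight b x V * charWeightLogGrad b x V k l) U (single k l 1 * U) =
      charWeight b x U * (charWeightLogGrad b x U l k * charWeightLogGrad b x U k l +
        ∑ i, (1 - charLogGrad (x i) U) k k * charLogGrad (x i) U l l) := by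
  have hline : HasDerivAt (fun s : ℂ => U + s • (single k l 1 * U)) (single k l 1 * U) 0 := by
    simpa using ((hasDerivAt_id (0 : ℂ)).smul_const (single k l (1 : ℂ) * U)).const_add U
  have hfderiv := ((contDiffAt_charWeight_mul_charWeightLogGrad b hU hx k l).differentiableAt
    one_ne_zero).hasFDerivAt.comp_hasDerivAt_of_eq 0 hline (by simp)
  have hentry := (LinearMap.toContinuousLinearMap (entryLinearMap ℂ ℂ k l)).hasFDerivAt
    |>.comp_hasDerivAt 0 (hasDerivAt_charWeightLogGrad b hx (single k l 1))
  rw [hfderiv.unique ((hasDerivAt_charWeight b hU hx (single k l 1)).mul hentry)]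
  have hsingle (A B : Matrix m m ℂ) :
      (A * single k l (1 : ℂ) * B : Matrix m m ℂ) k l = A k k * B l l := by
    rw [mul_assoc, mul_apply, Finset.sum_eq_single k] <;> simp +contextual
  simp only [zero_smul, add_zero, trace_mul_single, MulOpposite.op_one, one_smul,
    LinearMap.coe_toContinuousLinearMap', entryLinearMap_apply, Matrix.sum_apply,
    hsingle, mul_add, mul_assoc (charWeight b x U)]

end SchwingerDyson

section HaarSchwingerDyson

variable {ι : Type*} [Fintype ι] {N : ℕ}

theorem det_ne_zero_of_unitary (U : unitaryGroup (Fin N) ℂ) :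
    (U : Matrix (Fin N) (Fin N) ℂ).det ≠ 0 :=
  (UnitaryGroup.det_isUnit U).ne_zero

open scoped Matrix.Norms.L2Operator

theorem det_scalar_sub_ne_zero_of_unitary (U : unitaryGroup (Fin N) ℂ) {x : ℂ} (hx : ‖x‖ ≠ 1) :
    (scalar (Fin N) x - (U : Matrix (Fin N) (Fin N) ℂ)).det ≠ 0 := fun hdet => hx <| by
  simpa using spectrum.subset_circle_of_unitary U.2 ((spectrum.mem_iff (R := ℂ)).mpr fun hunit =>
    ((isUnit_iff_isUnit_det _).mp hunit).ne_zero hdet)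

theorem integral_charWeight_mul_trace_eq_zero (ℙ : Measure (unitaryGroup (Fin N) ℂ))
    [IsFiniteMeasure ℙ] [ℙ.IsMulLeftInvariant] (b : ℕ) {x : ι → ℂ} (hx : ∀ i, ‖x i‖ ≠ 1) :
    ∫ U : unitaryGroup (Fin N) ℂ, charWeight b x U.1 *
      ((charWeightLogGrad b x U.1 * charWeightLogGrad b x U.1).trace +
        ∑ i, (charLogGrad (x i) U.1).trace * (N - (charLogGrad (x i) U.1).trace)) ∂ℙ = 0 := by
  have hdet (U : unitaryGroup (Fin N) ℂ) := det_ne_zero_of_unitary U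
  have hchar (U : unitaryGroup (Fin N) ℂ) (i) := det_scalar_sub_ne_zero_of_unitary U (hx i)
  have hcontract (U : unitaryGroup (Fin N) ℂ) : charWeight b x U.1 *
      ((charWeightLogGrad b x U.1 * charWeightLogGrad b x U.1).trace +
        ∑ i, (charLogGrad (x i) U.1).trace * (N - (charLogGrad (x i) U.1).trace)) =
      ∑ l, ∑ k, fderiv ℂ (fun V => charWeight b x V * charWeightLogGrad b x V k l) U.1
        (single k l 1 * U.1) := by
    have htrace (i) : N - (charLogGrad (x i) U.1).trace = (1 - charLogGrad (x i) U.1).trace := by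
      simp [trace_sub]
    simp only [fderiv_charWeight_mul_charWeightLogGrad b (hdet U) (hchar U), ← Finset.mul_sum,
      Finset.sum_add_distrib, htrace]
    congr 2
    simp only [trace, diag_apply, Finset.sum_mul_sum]
    rw [Finset.sum_comm]
    refine Finset.sum_congr rfl fun l _ => ?_
    rw [Finset.sum_comm]
    simp only [mul_comm]
  have hint (l k) := integrable_of_continuous (continuous_fderiv_mul (fun U =>
    contDiffAt_charWeight_mul_charWeightLogGrad b (hdet U) (hchar U) k l) (single k l 1)) ℙ
  simp only [hcontract]
  rw [integral_finsetSum _ fun l _ => integrable_finsetSum _ fun k _ => hint l k]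
  refine Finset.sum_eq_zero fun l _ => ?_
  rw [integral_finsetSum _ fun k _ => hint l k]
  exact Finset.sum_eq_zero fun k _ => integral_fderiv_mul_eq_zero ℙ
    (fun U => contDiffAt_charWeight_mul_charWeightLogGrad b (hdet U) (hchar U) k l) _

end HaarSchwingerDyson

section Determinants

variable {R n ι : Type*} [CommRing R] [Fintype n] [DecidableEq n] [Fintype ι]

theorem sum_det_updateRow_mul (M : Matrix n n R) (d : n → R) :
    ∑ i, (M.updateRow i fun k => d k * M i k).det = (∑ k, d k) * M.det := by
  have hrow (i : n) : (M.updateRow i fun k => d k * M i k).det =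
      ∑ k, d k * (M.adjugate k i * M i k) := by
    rw [← cramer_transpose_apply, cramer_eq_adjugate_mulVec, ← adjugate_transpose]
    exact Finset.sum_congr rfl fun k _ => mul_left_comm ..
  have hdiag (k : n) : ∑ i, M.adjugate k i * M i k = M.det := by
    simpa [mul_apply] using congr_fun₂ (adjugate_mul M) k k
  simp only [hrow]
  rw [Finset.sum_comm]
  simp only [← Finset.mul_sum, hdiag, ← Finset.sum_mul]

theorem det_mul_eq_sum_det_submatrix (A : Matrix n ι R) (B : Matrix ι n R) :
    (A * B).det = ∑ m : n → ι, (∏ i, A i (m i)) * (B.submatrix m id).det := by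
  classical
  have hrows : A * B = fun i => ∑ l, A i l • B l := by
    ext i k
    simp [mul_apply]
  rw [hrows]
  refine (detRowAlternating.toMultilinearMap.map_sum fun i l => A i l • B l).trans ?_
  exact Finset.sum_congr rfl fun m _ => detRowAlternating.toMultilinearMap.map_smul_univ
    (fun i => A i (m i)) fun i => B (m i)

theorem sum_weight_mul_det_submatrix (A : Matrix n ι R) (B : Matrix ι n R) (w : ι → R) :
    ∑ m : n → ι, (∑ i, w (m i)) * ((∏ i, A i (m i)) * (B.submatrix m id).det) =
      ∑ i, ((A * B).updateRow i fun k => ∑ l, w l * A i l * B l k).det := by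
  have hrow (i : n) : ((A * B).updateRow i fun k => ∑ l, w l * A i l * B l k) =
      A.updateRow i (fun l => w l * A i l) * B := by
    rw [updateRow_mul]
    rfl
  have hprod (i : n) (m : n → ι) : ∏ j, A.updateRow i (fun l => w l * A i l) j (m j) =
      w (m i) * ∏ j, A j (m j) := by
    rw [← Finset.mul_prod_erase _ _ (Finset.mem_univ i), updateRow_self,
      ← Finset.mul_prod_erase _ (fun j => A j (m j)) (Finset.mem_univ i), mul_assoc]
    congr 2
    exact Finset.prod_congr rfl fun j hj => by rw [updateRow_ne (Finset.ne_of_mem_erase hj)]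
  simp only [Finset.sum_mul]
  rw [Finset.sum_comm]
  refine Finset.sum_congr rfl fun i _ => ?_
  rw [hrow, det_mul_eq_sum_det_submatrix]
  exact Finset.sum_congr rfl fun m _ => by rw [hprod, mul_assoc]

end Determinants

section Vandermonde

variable {F : Type*} [Field F] {n : ℕ}

-- By Lagrange interpolation the new row is `∑ j, φ (Lⱼ) • (j-th row)`.
theorem det_vandermonde_updateRow {x : Fin n → F} (hx : Function.Injective x) (i : Fin n)
    (φ : F[X] →ₗ[F] F) : ((vandermonde x).updateRow i fun k => φ (X ^ (k : ℕ))).det =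
      φ (Lagrange.basis Finset.univ x i) * (vandermonde x).det := by
  rw [← smul_eq_mul, ← det_updateRow_sum _ i fun j => φ (Lagrange.basis Finset.univ x j)]
  congr! 2
  ext k
  have hinterp : (X ^ (k : ℕ) : F[X]) =
      ∑ j, C (x j ^ (k : ℕ)) * Lagrange.basis Finset.univ x j := by
    simpa [Lagrange.interpolate_apply] using Lagrange.eq_interpolate (s := Finset.univ)
      (f := X ^ (k : ℕ)) hx.injOn (by simp)
  rw [hinterp, map_sum, Finset.sum_apply]
  exact Finset.sum_congr rfl fun j _ => by
    rw [← smul_eq_C_mul, map_smul, smul_eq_mul, mul_comm]; rfl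

theorem eval_derivative_lagrangeBasis_self {ι : Type*} [DecidableEq ι] {s : Finset ι} {x : ι → F}
    (hx : Set.InjOn x s) {i : ι} (hi : i ∈ s) :
    (derivative (Lagrange.basis s x i)).eval (x i) = ∑ j ∈ s.erase i, (x i - x j)⁻¹ := by
  have hne {j} (hj : j ∈ s.erase i) : x i ≠ x j := fun h =>
    Finset.ne_of_mem_erase hj (hx (Finset.mem_of_mem_erase hj) hi h.symm)
  rw [Lagrange.basis, derivative_prod_finset, eval_finsetSum]
  refine Finset.sum_congr rfl fun j _ => ?_
  rw [eval_mul, eval_prod, Finset.prod_eq_one fun k hk =>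
    Lagrange.eval_basisDivisor_left_of_ne (hne (Finset.mem_of_mem_erase hk)), one_mul]
  simp [Lagrange.basisDivisor]

theorem det_vandermonde_updateRow_mul_pow {x : Fin n → F} (hx : Function.Injective x)
    (i : Fin n) : ((vandermonde x).updateRow i fun k => (k : F) * x i ^ (k : ℕ)).det =
      (∑ j ∈ Finset.univ.erase i, x i / (x i - x j)) * (vandermonde x).det := by
  have hrow (k : ℕ) : (k : F) * x i ^ k = x i * (derivative (X ^ k : F[X])).eval (x i) := by
    rcases k with _ | k
    · simp
    · simp only [derivative_X_pow, eval_mul, eval_C, eval_pow, eval_X, Nat.add_sub_cancel]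
      ring
  have h := det_vandermonde_updateRow hx i (x i • (leval (x i)).comp derivative)
  simp only [LinearMap.smul_apply, LinearMap.comp_apply, leval_apply, smul_eq_mul, ← hrow,
    eval_derivative_lagrangeBasis_self hx.injOn (Finset.mem_univ i), Finset.mul_sum] at h
  simpa only [div_eq_mul_inv] using h

theorem sum_sum_erase_eq_two_mul_sum {x : Fin n → F} (hx : Function.Injective x) (t : Fin n → F) :
    ∑ i, ∑ j ∈ Finset.univ.erase i, x i * x j * ((t j - t i) / (x i - x j)) =
      2 * ∑ i, x i * t i * (n - 1 - ∑ j ∈ Finset.univ.erase i, x i / (x i - x j)) := by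
  have hsymm : ∑ i, ∑ j ∈ Finset.univ.erase i, x i * x j * (t j / (x i - x j)) =
      -∑ i, ∑ j ∈ Finset.univ.erase i, x i * x j * (t i / (x i - x j)) := by
    rw [Finset.sum_comm' (s' := fun j => Finset.univ.erase j) (t' := Finset.univ)
      (by simp [eq_comm]), ← Finset.sum_neg_distrib]
    refine Finset.sum_congr rfl fun i _ => ?_
    rw [← Finset.sum_neg_distrib]
    refine Finset.sum_congr rfl fun j _ => ?_
    rw [← neg_sub (x i), div_neg]
    ring
  have hinner (i : Fin n) : ∑ j ∈ Finset.univ.erase i, x j / (x i - x j) =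
      ∑ j ∈ Finset.univ.erase i, x i / (x i - x j) - (n - 1) := by
    have hcard : (n - 1 : F) = ∑ j ∈ Finset.univ.erase i, 1 := by
      simp [Finset.card_erase_of_mem, Nat.cast_sub i.pos]
    rw [hcard, ← Finset.sum_sub_distrib]
    refine Finset.sum_congr rfl fun j hj => ?_
    have hne : x i - x j ≠ 0 :=
      sub_ne_zero.mpr fun h => Finset.ne_of_mem_erase hj (hx h).symm
    field_simp
    ring
  calc ∑ i, ∑ j ∈ Finset.univ.erase i, x i * x j * ((t j - t i) / (x i - x j))
      = -2 * ∑ i, x i * t i * ∑ j ∈ Finset.univ.erase i, x j / (x i - x j) := by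
        simp only [sub_div, mul_sub, Finset.sum_sub_distrib]
        rw [hsymm, ← neg_add', ← two_mul, ← neg_mul]
        simp only [Finset.mul_sum]
        exact Finset.sum_congr rfl fun i _ => Finset.sum_congr rfl fun j _ => by ring
    _ = _ := by
        simp only [hinner, Finset.mul_sum]
        exact Finset.sum_congr rfl fun i _ => by ring

end Vandermonde

section EulerOperator

variable {F : Type*} [Field F] {n D : ℕ}

/-- The coefficients of `p, X p, …, X ^ (n - 1) p` as the columns of a matrix; its maximal minors
are the coefficients of `det V(x) * ∏ᵢ p(xᵢ)` as a polynomial in the `xᵢ`. -/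
noncomputable def shiftCoeff (n D : ℕ) (p : F[X]) : Matrix (Fin D) (Fin n) F :=
  of fun l k => (X ^ (k : ℕ) * p).coeff l

theorem coeff_X_mul_derivative (p : F[X]) (l : ℕ) :
    (X * derivative p).coeff l = l * p.coeff l := by
  cases l with
  | zero => simp
  | succ l => rw [coeff_X_mul, coeff_derivative, Nat.cast_succ, mul_comm]

theorem sum_coeff_mul_pow {p : F[X]} (hp : p.natDegree < D) (x : F) :
    ∑ l : Fin D, x ^ (l : ℕ) * p.coeff l = p.eval x := by
  rw [eval_eq_sum_range' hp, Finset.sum_range]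
  exact Finset.sum_congr rfl fun _ _ => mul_comm ..

theorem natDegree_X_pow_mul_lt {p : F[X]} (hD : p.natDegree + n ≤ D) (k : Fin n) :
    (X ^ (k : ℕ) * p).natDegree < D := by
  have := natDegree_mul_le (p := X ^ (k : ℕ)) (q := p)
  rw [natDegree_X_pow] at this
  omega

theorem rectVandermonde_mul_shiftCoeff {p : F[X]} (hD : p.natDegree + n ≤ D) (x : Fin n → F) :
    rectVandermonde x 1 D * shiftCoeff n D p = of fun i k => p.eval (x i) * vandermonde x i k := by
  ext i k
  simp only [mul_apply, rectVandermonde, shiftCoeff, of_apply, Pi.one_apply, one_pow, mul_one]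
  rw [sum_coeff_mul_pow (natDegree_X_pow_mul_lt hD k)]
  simp [vandermonde_apply, mul_comm]

theorem sum_prod_pow_mul_det_shiftCoeff {p : F[X]} (hD : p.natDegree + n ≤ D) (x : Fin n → F) :
    ∑ m : Fin n → Fin D, (∏ i, x i ^ (m i : ℕ)) * ((shiftCoeff n D p).submatrix m id).det =
      (∏ i, p.eval (x i)) * (vandermonde x).det := by
  have h := det_mul_eq_sum_det_submatrix (rectVandermonde x 1 D) (shiftCoeff n D p)
  rw [rectVandermonde_mul_shiftCoeff hD, det_mul_column] at h
  simpa [rectVandermonde] using h.symm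

theorem sum_casimir_mul_shiftCoeff {p : F[X]} (hD : p.natDegree + n ≤ D) {x τ σ : F}
    (hτ : (derivative p).eval x = p.eval x * τ)
    (hσ : (derivative (derivative p)).eval x = p.eval x * σ) (κ : F) (k : Fin n) :
    ∑ l : Fin D, (κ * (l : ℕ) - (l : ℕ) ^ 2) * x ^ (l : ℕ) * shiftCoeff n D p l k =
      p.eval x * ((κ - 2 * (x * τ)) * (k * x ^ (k : ℕ)) - k ^ 2 * x ^ (k : ℕ) +
        ((κ - 1) * (x * τ) - x ^ 2 * σ) * x ^ (k : ℕ)) := by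
  set q := X ^ (k : ℕ) * p with hq
  have hX_mul_derivative (r : F[X]) :
      X * derivative (X ^ (k : ℕ) * r) = X ^ (k : ℕ) * (C (k : F) * r + X * derivative r) := by
    rw [derivative_mul, derivative_X_pow]
    rcases (k : ℕ) with _ | j
    · simp
    · rw [Nat.add_sub_cancel]
      ring
  have hdeg (r : F[X]) (hr : r.natDegree < D) : (X * derivative r).natDegree < D := by
    refine (natDegree_le_iff_coeff_eq_zero.mpr fun l hl => ?_).trans_lt hr
    rw [coeff_X_mul_derivative, coeff_eq_zero_of_natDegree_lt hl, mul_zero]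
  have hq_deg : q.natDegree < D := natDegree_X_pow_mul_lt hD k
  calc ∑ l : Fin D, (κ * (l : ℕ) - (l : ℕ) ^ 2) * x ^ (l : ℕ) * shiftCoeff n D p l k
      = κ * (X * derivative q).eval x - (X * derivative (X * derivative q)).eval x := by
        rw [← sum_coeff_mul_pow (hdeg _ hq_deg), ← sum_coeff_mul_pow (hdeg _ (hdeg _ hq_deg)),
          Finset.mul_sum, ← Finset.sum_sub_distrib]
        refine Finset.sum_congr rfl fun l _ => ?_
        simp only [shiftCoeff, of_apply, ← hq, coeff_X_mul_derivative]
        ring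
    _ = _ := by
        rw [hq, hX_mul_derivative p, hX_mul_derivative (C (k : F) * p + X * derivative p)]
        simp only [derivative_add, derivative_mul, derivative_C, derivative_X, eval_mul, eval_add,
          eval_pow, eval_C, eval_X, eval_zero, eval_one, hτ, hσ]
        ring

theorem det_updateRow_casimir (x c : Fin n → F) (a b : F) (i : Fin n) :
    ((of fun i k => c i * vandermonde x i k).updateRow i fun k =>
        c i * (a * (k * x i ^ (k : ℕ)) - k ^ 2 * x i ^ (k : ℕ) + b * x i ^ (k : ℕ))).det =
      (∏ j, c j) * (a * ((vandermonde x).updateRow i fun k => k * x i ^ (k : ℕ)).det -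
        ((vandermonde x).updateRow i fun k => k ^ 2 * x i ^ (k : ℕ)).det +
        b * (vandermonde x).det) := by
  have hrow : ((of fun i k => c i * vandermonde x i k).updateRow i fun k =>
        c i * (a * (k * x i ^ (k : ℕ)) - k ^ 2 * x i ^ (k : ℕ) + b * x i ^ (k : ℕ))) =
      of fun j k => c j * (vandermonde x).updateRow i
        (a • (fun k : Fin n => (k : F) * x i ^ (k : ℕ)) +
          (-1 : F) • (fun k : Fin n => (k : F) ^ 2 * x i ^ (k : ℕ)) + b • vandermonde x i) j k := by
    ext j k
    rcases eq_or_ne j i with rfl | hj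
    · simp [vandermonde_apply, sub_eq_add_neg]
    · simp [hj]
  rw [hrow, det_mul_column, det_updateRow_add, det_updateRow_add, det_updateRow_smul,
    det_updateRow_smul, det_updateRow_smul, updateRow_eq_self, neg_one_mul, ← sub_eq_add_neg]

/- The Euler-type operator `∑ᵢ (κ θᵢ - θᵢ²)`, `θᵢ = xᵢ ∂/∂xᵢ`, applied to `det V(x) * ∏ᵢ p(xᵢ)`, on
monomials on the left and by the product rule on the right. -/
theorem sum_casimir_mul_det_shiftCoeff {p : F[X]} (hD : p.natDegree + n ≤ D) {x τ σ : Fin n → F}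
    (hx : Function.Injective x) (hτ : ∀ i, (derivative p).eval (x i) = p.eval (x i) * τ i)
    (hσ : ∀ i, (derivative (derivative p)).eval (x i) = p.eval (x i) * σ i) (κ : F) :
    ∑ m : Fin n → Fin D, (∑ i, (κ * (m i : ℕ) - (m i : ℕ) ^ 2)) *
        ((∏ i, x i ^ (m i : ℕ)) * ((shiftCoeff n D p).submatrix m id).det) =
      (∏ i, p.eval (x i)) * (vandermonde x).det *
        (∑ k : Fin n, (κ * k - k ^ 2) + ∑ i, ((κ - 1) * (x i * τ i) - x i ^ 2 * σ i -
          2 * (x i * τ i * ∑ j ∈ Finset.univ.erase i, x i / (x i - x j)))) := by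
  have hsum := sum_weight_mul_det_submatrix (rectVandermonde x 1 D) (shiftCoeff n D p)
    fun l => κ * (l : ℕ) - (l : ℕ) ^ 2
  simp only [rectVandermonde_mul_shiftCoeff hD] at hsum
  simp only [rectVandermonde, of_apply, Pi.one_apply, one_pow, mul_one,
    sum_casimir_mul_shiftCoeff hD (hτ _) (hσ _), det_updateRow_casimir x fun i => p.eval (x i)]
    at hsum
  set V := vandermonde x with hV
  have hlin := sum_det_updateRow_mul V fun k => (k : F)
  have hquad := sum_det_updateRow_mul V fun k => (k : F) ^ 2
  simp only [hV, vandermonde_apply] at hlin hquad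
  have hterm (i : Fin n) :
      (κ - 2 * (x i * τ i)) * (V.updateRow i fun k => k * x i ^ (k : ℕ)).det -
          (V.updateRow i fun k => k ^ 2 * x i ^ (k : ℕ)).det +
          ((κ - 1) * (x i * τ i) - x i ^ 2 * σ i) * V.det =
        κ * (V.updateRow i fun k => k * x i ^ (k : ℕ)).det -
          (V.updateRow i fun k => k ^ 2 * x i ^ (k : ℕ)).det +
          ((κ - 1) * (x i * τ i) - x i ^ 2 * σ i -
            2 * (x i * τ i * ∑ j ∈ Finset.univ.erase i, x i / (x i - x j))) * V.det := by
    rw [hV, det_vandermonde_updateRow_mul_pow hx]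
    ring
  rw [hsum, ← Finset.mul_sum]
  simp only [hterm]
  rw [Finset.sum_add_distrib, Finset.sum_sub_distrib, ← Finset.mul_sum, hlin, hquad,
    ← Finset.sum_mul, Finset.sum_sub_distrib (s := Finset.univ) (f := fun k : Fin n => κ * (k : F)),
    ← Finset.mul_sum]
  ring

end EulerOperator

section Resolvent

variable {m : Type*} [Fintype m] [DecidableEq m]

theorem hasDerivAt_scalar_sub_apply (U : Matrix m m ℂ) (x : ℂ) (i j : m) :
    HasDerivAt (fun s => (scalar m s - U) i j) ((1 : Matrix m m ℂ) i j) x := by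
  simpa [scalar_apply, diagonal_apply, one_apply] using
    ((hasDerivAt_id x).mul_const ((1 : Matrix m m ℂ) i j)).sub_const (U i j)

theorem eval_derivative_charpoly {U : Matrix m m ℂ} {x : ℂ} (hx : (scalar m x - U).det ≠ 0) :
    (derivative U.charpoly).eval x = U.charpoly.eval x * ((scalar m x - U)⁻¹).trace := by
  have hdet := hasDerivAt_det_of_ne_zero (M := fun s => scalar m s - U)
    (hasDerivAt_scalar_sub_apply U x) hx
  simp only [← eval_charpoly, mul_one] at hdet
  exact (U.charpoly.hasDerivAt x).unique hdet

open scoped Matrix.Norms.L2Operator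

theorem eval_derivative_derivative_charpoly {U : Matrix m m ℂ} {x : ℂ}
    (hx : (scalar m x - U).det ≠ 0) :
    (derivative (derivative U.charpoly)).eval x = U.charpoly.eval x *
      (((scalar m x - U)⁻¹).trace ^ 2 - ((scalar m x - U)⁻¹ * (scalar m x - U)⁻¹).trace) := by
  have hnear : ∀ᶠ s in nhds x, (derivative U.charpoly).eval s =
      U.charpoly.eval s * ((scalar m s - U)⁻¹).trace := by
    have hcont : Continuous fun s => (scalar m s - U).det := by
      simp only [← eval_charpoly]
      exact U.charpoly.continuous
    filter_upwards [hcont.continuousAt.eventually_ne hx] with s hs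
    exact eval_derivative_charpoly hs
  have hline : HasDerivAt (fun s : ℂ => scalar m s - U) (1 : Matrix m m ℂ) x := by
    simpa [scalar_apply, ← smul_one_eq_diagonal] using
      ((hasDerivAt_id x).smul_const (1 : Matrix m m ℂ)).sub_const U
  have htrace : HasDerivAt (fun s => ((scalar m s - U)⁻¹).trace)
      (-((scalar m x - U)⁻¹ * (scalar m x - U)⁻¹).trace) x := by
    refine ((LinearMap.toContinuousLinearMap (traceLinearMap m ℂ ℂ)).hasFDerivAt.comp_hasDerivAt
      x (hasDerivAt_matrix_inv hline hx)).congr_deriv ?_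
    simp
  refine ((derivative U.charpoly).hasDerivAt x).unique
    ((((U.charpoly.hasDerivAt x).mul htrace).congr_of_eventuallyEq hnear).congr_deriv ?_)
  rw [eval_derivative_charpoly hx]
  ring

theorem trace_resolvent_mul {U : Matrix m m ℂ} {x y : ℂ} (hx : (scalar m x - U).det ≠ 0)
    (hy : (scalar m y - U).det ≠ 0) (hxy : x ≠ y) :
    ((scalar m x - U)⁻¹ * (scalar m y - U)⁻¹).trace =
      (((scalar m y - U)⁻¹).trace - ((scalar m x - U)⁻¹).trace) / (x - y) := by
  have hunit {M : Matrix m m ℂ} (hM : M.det ≠ 0) : IsUnit M :=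
    (isUnit_iff_isUnit_det M).mpr (isUnit_iff_ne_zero.mpr hM)
  have hinv := inv_sub_inv (A := scalar m y - U) (B := scalar m x - U)
    (iff_of_true (hunit hy) (hunit hx))
  have hdiff : scalar m x - U - (scalar m y - U) = (x - y) • 1 := by
    rw [sub_sub_sub_cancel_right, ← map_sub, scalar_apply, ← smul_one_eq_diagonal]
  rw [hdiff, mul_smul_comm, mul_one, smul_mul_assoc] at hinv
  rw [eq_div_iff (sub_ne_zero.mpr hxy), ← trace_sub, hinv, trace_smul, trace_mul_comm, mul_comm,
    smul_eq_mul]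

end Resolvent

section TraceIdentity

variable {N n : ℕ}

theorem charWeightLogGrad_eq (b : ℕ) (x : Fin n → ℂ) (U : Matrix (Fin N) (Fin N) ℂ) :
    charWeightLogGrad b x U =
      ((n : ℂ) - b) • 1 - ∑ i, x i • (scalar (Fin N) (x i) - U)⁻¹ := by
  simp only [charWeightLogGrad, charLogGrad, Finset.sum_sub_distrib, Finset.sum_const,
    Finset.card_univ, Fintype.card_fin, ← Nat.cast_smul_eq_nsmul ℂ, sub_smul]
  abel

theorem trace_charWeightLogGrad_sq (b : ℕ) (x : Fin n → ℂ) (U : Matrix (Fin N) (Fin N) ℂ) :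
    (charWeightLogGrad b x U * charWeightLogGrad b x U).trace =
      ((n : ℂ) - b) ^ 2 * N - 2 * ((n : ℂ) - b) * ∑ i, x i * ((scalar (Fin N) (x i) - U)⁻¹).trace +
        ∑ i, ∑ j, x i * x j *
          ((scalar (Fin N) (x i) - U)⁻¹ * (scalar (Fin N) (x j) - U)⁻¹).trace := by
  have hcross : (∑ i, x i • (scalar (Fin N) (x i) - U)⁻¹) *
      (∑ i, x i • (scalar (Fin N) (x i) - U)⁻¹) =
      ∑ i, ∑ j, (x i * x j) • ((scalar (Fin N) (x i) - U)⁻¹ * (scalar (Fin N) (x j) - U)⁻¹) := by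
    simp only [Finset.sum_mul_sum, smul_mul_smul_comm]
  rw [charWeightLogGrad_eq, sub_mul, mul_sub, mul_sub, hcross]
  simp only [smul_mul_assoc, one_mul, mul_smul_comm, mul_one, trace_sub, trace_smul, trace_sum,
    trace_one, Fintype.card_fin, smul_eq_mul]
  ring

theorem trace_charWeightLogGrad_sq_add (b : ℕ) {x : Fin n → ℂ} (hinj : Function.Injective x)
    {U : Matrix (Fin N) (Fin N) ℂ} (hx : ∀ i, (scalar (Fin N) (x i) - U).det ≠ 0) {τ σ : Fin n → ℂ}
    (hτ : ∀ i, ((scalar (Fin N) (x i) - U)⁻¹).trace = τ i)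
    (hσ : ∀ i, τ i ^ 2 - ((scalar (Fin N) (x i) - U)⁻¹ * (scalar (Fin N) (x i) - U)⁻¹).trace =
      σ i) :
    (charWeightLogGrad b x U * charWeightLogGrad b x U).trace +
        ∑ i, (charLogGrad (x i) U).trace * (N - (charLogGrad (x i) U).trace) =
      ((n : ℂ) - b) ^ 2 * N + ∑ i, ((N - 1 + 2 * b - 1) * (x i * τ i) - x i ^ 2 * σ i -
        2 * (x i * τ i * ∑ j ∈ Finset.univ.erase i, x i / (x i - x j))) := by
  have hdouble : ∑ i, ∑ j, x i * x j *
      ((scalar (Fin N) (x i) - U)⁻¹ * (scalar (Fin N) (x j) - U)⁻¹).trace =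
      ∑ i, x i ^ 2 * (τ i ^ 2 - σ i) +
        2 * ∑ i, x i * τ i * (n - 1 - ∑ j ∈ Finset.univ.erase i, x i / (x i - x j)) := by
    rw [← sum_sum_erase_eq_two_mul_sum hinj, ← Finset.sum_add_distrib]
    refine Finset.sum_congr rfl fun i _ => ?_
    rw [← Finset.add_sum_erase _ _ (Finset.mem_univ i), ← hσ i, sub_sub_cancel, ← sq]
    refine congrArg _ (Finset.sum_congr rfl fun j hj => ?_)
    rw [trace_resolvent_mul (hx i) (hx j) fun h => Finset.ne_of_mem_erase hj (hinj h).symm,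
      hτ, hτ]
  have htrace (i : Fin n) : (charLogGrad (x i) U).trace = N - x i * τ i := by
    simp [charLogGrad, ← hτ]
  rw [trace_charWeightLogGrad_sq, hdouble]
  have hsingle (S : Fin n → ℂ) :
      ∑ i, ((N - 1 + 2 * b - 1) * (x i * τ i) - x i ^ 2 * σ i - 2 * (x i * τ i * S i)) =
        ∑ i, x i ^ 2 * (τ i ^ 2 - σ i) + 2 * ∑ i, x i * τ i * (n - 1 - S i) +
          ∑ i, (N - x i * τ i) * (x i * τ i) - 2 * ((n : ℂ) - b) * ∑ i, x i * τ i := by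
    simp only [Finset.mul_sum, ← Finset.sum_add_distrib, ← Finset.sum_sub_distrib]
    exact Finset.sum_congr rfl fun i _ => by ring
  rw [hsingle]
  simp only [htrace, hτ, sub_sub_cancel]
  ring

end TraceIdentity

section Alternant

/-- The exponents `0, …, b - 1, b + N, b + N + 1, …` of the alternant computing the moments of
characteristic polynomials of `N × N` unitary matrices. -/
def gapExponent (N b k : ℕ) : ℕ := if k < b then k else k + N

/-- The eigenvalue of the Casimir operator on the exponent `l`: nonpositive exactly in the gap
`b ≤ l < b + N` left by `gapExponent N b`. -/
def casimirWeight (N b l : ℕ) : ℤ := ((l : ℤ) - b) * ((l : ℤ) - b - N + 1)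

theorem gapExponent_injective (N b : ℕ) : Function.Injective (gapExponent N b) := by
  intro i j h
  simp only [gapExponent] at h
  split_ifs at h <;> omega

/-- The first `n` values of `gapExponent N b`, as indices below `N + n`. -/
def gapEmbedding (N b n : ℕ) : Fin n ↪ Fin (N + n) where
  toFun k := ⟨gapExponent N b k, by unfold gapExponent; split_ifs <;> omega⟩
  inj' i j h := Fin.ext ((gapExponent_injective N b) (congrArg Fin.val h))

theorem casimirWeight_gapExponent_pos {N : ℕ} (hN : 0 < N) (b k : ℕ) :
    0 < casimirWeight N b (gapExponent N b k) := by
  unfold casimirWeight gapExponent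
  split_ifs with hk
  · apply mul_pos_of_neg_of_neg <;> omega
  · apply mul_pos <;> omega

theorem casimirWeight_nonpos {N b l : ℕ} (h : ∀ k, gapExponent N b k ≠ l) :
    casimirWeight N b l ≤ 0 := by
  have hl : b ≤ l ∧ l < b + N := by
    by_contra hl
    have hk := h (if l < b then l else l - N)
    unfold gapExponent at hk
    split_ifs at hk <;> omega
  apply mul_nonpos_of_nonneg_of_nonpos <;> omega

theorem sum_casimirWeight_gapExponent {N b n : ℕ} (hb : b ≤ n) :
    ∑ k : Fin n, casimirWeight N b (gapExponent N b k) =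
      ((n : ℤ) - b) ^ 2 * N + ∑ k : Fin n, casimirWeight N b k := by
  rw [← sub_eq_iff_eq_add, ← Finset.sum_sub_distrib, Fin.sum_univ_eq_sum_range
    fun k => casimirWeight N b (gapExponent N b k) - casimirWeight N b k]
  induction n, hb using Nat.le_induction with
  | base =>
    rw [Finset.sum_eq_zero fun k hk => by
      rw [gapExponent, if_pos (Finset.mem_range.mp hk), sub_self]]
    simp
  | succ n hn ih =>
    rw [Finset.sum_range_succ, ih, gapExponent, if_neg hn.not_gt, casimirWeight, casimirWeight]
    push_cast
    ring

theorem eq_of_card_eq_of_sum_eq {α : Type*} {S T : Finset α} {w : α → ℤ}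
    (hcard : T.card = S.card) (hsum : ∑ a ∈ S, w a = ∑ a ∈ T, w a) (hpos : ∀ a ∈ S, 0 < w a)
    (hnonpos : ∀ a ∉ S, w a ≤ 0) : S = T := by
  classical
  refine Finset.eq_of_subset_of_card_le (Finset.sdiff_eq_empty_iff_subset.mp ?_) hcard.le
  by_contra hne
  have hdiff := Finset.sum_sdiff_sub_sum_sdiff (s₁ := S) (s₂ := T) (f := w)
  have hleft : 0 < ∑ a ∈ S \ T, w a :=
    Finset.sum_pos (fun a ha => hpos a (Finset.mem_sdiff.mp ha).1) (Finset.nonempty_of_ne_empty hne)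
  have hright : ∑ a ∈ T \ S, w a ≤ 0 :=
    Finset.sum_nonpos fun a ha => hnonpos a (Finset.mem_sdiff.mp ha).2
  omega

theorem exists_gapEmbedding_comp_perm_eq {N b n : ℕ} (hN : 0 < N) (hb : b ≤ n)
    {m : Fin n → Fin (N + n)} (hm : Function.Injective m)
    (hsum : ∑ k : Fin n, casimirWeight N b (gapExponent N b k) =
      ∑ i, casimirWeight N b (m i)) :
    ∃ σ : Equiv.Perm (Fin n), gapEmbedding N b n ∘ σ = m := by
  have himage : Finset.univ.map (gapEmbedding N b n) = Finset.univ.map ⟨m, hm⟩ := by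
    refine eq_of_card_eq_of_sum_eq (w := fun l : Fin (N + n) => casimirWeight N b l) (by simp)
      (by rw [Finset.sum_map, Finset.sum_map]; exact hsum) (fun l hl => ?_)
      fun l hl => casimirWeight_nonpos fun k hk => hl ?_
    · obtain ⟨k, -, rfl⟩ := Finset.mem_map.mp hl
      exact casimirWeight_gapExponent_pos hN b k
    · have hkn : k < n := by
        have := l.2
        unfold gapExponent at hk
        split_ifs at hk <;> omega
      exact Finset.mem_map.mpr ⟨⟨k, hkn⟩, Finset.mem_univ _, Fin.ext hk⟩
  have hmem (i : Fin n) : ∃ k, gapEmbedding N b n k = m i := by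
    have := himage.ge (Finset.mem_map_of_mem ⟨m, hm⟩ (Finset.mem_univ i))
    simpa only [Finset.mem_map, Finset.mem_univ, true_and, Function.Embedding.coeFn_mk] using this
  choose σ hσ using hmem
  have hσ_inj : Function.Injective σ := fun i j h => hm (by rw [← hσ, ← hσ, h])
  exact ⟨.ofBijective σ (Finite.injective_iff_bijective.mp hσ_inj), funext hσ⟩

end Alternant

section MultivariatePolynomials

variable {R : Type*} [CommRing R] [IsDomain R] {n D : ℕ}

theorem eq_zero_of_forall_sum_mul_prod_pow_eq_zero {c : (Fin n → Fin D) → R} (s : Fin n → Set R)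
    (hs : ∀ i, (s i).Infinite)
    (hc : ∀ x ∈ Set.univ.pi s, ∑ m, c m * ∏ i, x i ^ (m i : ℕ) = 0) (m : Fin n → Fin D) :
    c m = 0 := by
  classical
  let exponents (m : Fin n → Fin D) : Fin n →₀ ℕ :=
    Finsupp.equivFunOnFinite.symm fun i => (m i : ℕ)
  have hinj : Function.Injective exponents := fun m m' h => funext fun i =>
    Fin.ext (congrFun (Finsupp.equivFunOnFinite.symm.injective h) i)
  have hzero : ∑ m, MvPolynomial.monomial (exponents m) (c m) = 0 := by
    refine MvPolynomial.funext_set s hs fun x hx => ?_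
    rw [map_zero, ← hc x hx, map_sum]
    refine Finset.sum_congr rfl fun m _ => ?_
    rw [MvPolynomial.eval_monomial, Finsupp.prod_fintype _ _ fun i => pow_zero _]
    rfl
  simpa [MvPolynomial.coeff_sum, MvPolynomial.coeff_monomial, hinj.eq_iff] using
    congrArg (MvPolynomial.coeff (exponents m)) hzero

theorem exists_infinite_sets_injective_norm_ne_one (n : ℕ) :
    ∃ s : Fin n → Set ℂ, (∀ i, (s i).Infinite) ∧
      ∀ x ∈ Set.univ.pi s, Function.Injective x ∧ ∀ i, ‖x i‖ ≠ 1 := by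
  refine ⟨fun i => (↑) '' Set.Ioo ((i : ℝ) + 2) (i + 3),
    fun i => (Set.Ioo_infinite (by linarith)).image Complex.ofReal_injective.injOn, fun x hx => ?_⟩
  choose t ht hxt using fun i => hx i trivial
  obtain rfl : (fun i => (t i : ℂ)) = x := funext hxt
  refine ⟨fun i j hij => ?_, fun i => ?_⟩
  · have hij : t i = t j := Complex.ofReal_injective hij
    have hlt₁ : (i : ℝ) < j + 1 := by linarith [(ht i).1, (ht j).2]
    have hlt₂ : (j : ℝ) < i + 1 := by linarith [(ht j).1, (ht i).2]
    norm_cast at hlt₁ hlt₂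
    omega
  · have hlt : 1 < t i := by linarith [(ht i).1, (i : ℕ).cast_nonneg (α := ℝ)]
    rw [Complex.norm_of_nonneg (by linarith)]
    exact hlt.ne'

end MultivariatePolynomials

section Moments

variable {N n : ℕ}

/-- The minor `m` of the shifted coefficients of the characteristic polynomial of `U`, twisted by
`(det U)⁻ᵇ`: the coefficient of `∏ i, x i ^ m i` in `det V(x) * charWeight b x U`. -/
noncomputable def charMinor (b : ℕ) (m : Fin n → Fin (N + n)) (U : Matrix (Fin N) (Fin N) ℂ) : ℂ :=
  U.det⁻¹ ^ b * ((shiftCoeff n (N + n) U.charpoly).submatrix m id).det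

theorem sum_charMinor_mul_prod_pow (b : ℕ) (x : Fin n → ℂ) (U : Matrix (Fin N) (Fin N) ℂ) :
    ∑ m : Fin n → Fin (N + n), charMinor b m U * ∏ i, x i ^ (m i : ℕ) =
      (vandermonde x).det * charWeight b x U := by
  have hsum := sum_prod_pow_mul_det_shiftCoeff (p := U.charpoly) (D := N + n) (by simp) x
  simp only [charMinor, charWeight, ← eval_charpoly]
  rw [← mul_left_comm, mul_comm (vandermonde x).det, ← hsum, Finset.mul_sum]
  exact Finset.sum_congr rfl fun m _ => by ring

theorem sum_casimirWeight_mul_charMinor {b : ℕ} (hb : b ≤ n) {x : Fin n → ℂ}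
    (hinj : Function.Injective x) {U : Matrix (Fin N) (Fin N) ℂ}
    (hx : ∀ i, (scalar (Fin N) (x i) - U).det ≠ 0) :
    ∑ m : Fin n → Fin (N + n),
        ((∑ k : Fin n, casimirWeight N b (gapExponent N b k) - ∑ i, casimirWeight N b (m i) : ℤ) :
          ℂ) * charMinor b m U * ∏ i, x i ^ (m i : ℕ) =
      (vandermonde x).det * (charWeight b x U *
        ((charWeightLogGrad b x U * charWeightLogGrad b x U).trace +
          ∑ i, (charLogGrad (x i) U).trace * (N - (charLogGrad (x i) U).trace))) := by
  have heuler := sum_casimir_mul_det_shiftCoeff (p := U.charpoly) (D := N + n) (by simp) hinj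
    (fun i => eval_derivative_charpoly (hx i))
    (fun i => eval_derivative_derivative_charpoly (hx i)) (N - 1 + 2 * b)
  have hbase := sum_prod_pow_mul_det_shiftCoeff (p := U.charpoly) (D := N + n) (by simp) x
  have hweight (l : ℕ) : (casimirWeight N b l : ℂ) =
      b * (b + N - 1) - ((N - 1 + 2 * b) * l - l ^ 2) := by
    push_cast [casimirWeight]
    ring
  have hcoeff (m : Fin n → Fin (N + n)) : ((∑ k : Fin n, casimirWeight N b (gapExponent N b k) -
      ∑ i, casimirWeight N b (m i) : ℤ) : ℂ) = ((n : ℂ) - b) ^ 2 * N -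
        ∑ k : Fin n, ((N - 1 + 2 * b) * (k : ℂ) - k ^ 2) +
        ∑ i, ((N - 1 + 2 * b) * ((m i : ℕ) : ℂ) - ((m i : ℕ) : ℂ) ^ 2) := by
    rw [sum_casimirWeight_gapExponent hb]
    push_cast
    simp only [hweight, Finset.sum_sub_distrib (s := Finset.univ)
      (f := fun _ => (b * (b + N - 1) : ℂ))]
    ring
  rw [trace_charWeightLogGrad_sq_add b hinj hx (fun _ => rfl) fun _ => rfl]
  calc ∑ m : Fin n → Fin (N + n), _
      = U.det⁻¹ ^ b * ((((n : ℂ) - b) ^ 2 * N - ∑ k : Fin n, ((N - 1 + 2 * b) * (k : ℂ) - k ^ 2)) *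
          (∑ m : Fin n → Fin (N + n), (∏ i, x i ^ (m i : ℕ)) *
            ((shiftCoeff n (N + n) U.charpoly).submatrix m id).det) +
          ∑ m : Fin n → Fin (N + n),
            (∑ i, ((N - 1 + 2 * b) * ((m i : ℕ) : ℂ) - ((m i : ℕ) : ℂ) ^ 2)) *
            ((∏ i, x i ^ (m i : ℕ)) *
              ((shiftCoeff n (N + n) U.charpoly).submatrix m id).det)) := by
        rw [Finset.mul_sum, ← Finset.sum_add_distrib, Finset.mul_sum]
        exact Finset.sum_congr rfl fun m _ => by rw [hcoeff, charMinor]; ring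
    _ = _ := by
        rw [hbase, heuler]
        simp only [charWeight, ← eval_charpoly]
        ring

theorem continuous_charpoly_coeff (l : ℕ) :
    Continuous fun U : Matrix (Fin N) (Fin N) ℂ => U.charpoly.coeff l := by
  have hcoeff (U : Matrix (Fin N) (Fin N) ℂ) : U.charpoly.coeff l =
      MvPolynomial.eval (fun p : Fin N × Fin N => U p.1 p.2)
        ((Matrix.charpoly.univ ℂ (Fin N)).coeff l) :=
    (Matrix.charpoly.univ_coeff_eval₂Hom (Fin N) (RingHom.id ℂ) (fun p => U p.1 p.2) l).symm
  simp only [hcoeff]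
  exact (MvPolynomial.continuous_eval _).comp
    (continuous_pi fun p => continuous_id.matrix_elem p.1 p.2)

theorem continuous_charMinor (b : ℕ) (m : Fin n → Fin (N + n)) :
    Continuous fun U : unitaryGroup (Fin N) ℂ => charMinor b m U.1 := by
  have hminor : Continuous fun U : Matrix (Fin N) (Fin N) ℂ =>
      ((shiftCoeff n (N + n) U.charpoly).submatrix m id).det := by
    refine Continuous.matrix_det (continuous_matrix fun i k => ?_)
    simp only [submatrix_apply, shiftCoeff, of_apply, coeff_X_pow_mul']
    split_ifs
    · exact continuous_charpoly_coeff _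
    · exact continuous_const
  exact ((Continuous.inv₀ (by fun_prop) det_ne_zero_of_unitary).pow b).mul
    (hminor.comp continuous_subtype_val)

theorem charMinor_comp_perm (b : ℕ) (m : Fin n → Fin (N + n)) (σ : Equiv.Perm (Fin n))
    (U : Matrix (Fin N) (Fin N) ℂ) :
    charMinor b (m ∘ σ) U = (Equiv.Perm.sign σ : ℤ) * charMinor b m U := by
  rw [charMinor, charMinor, mul_left_comm, ← det_permute, submatrix_submatrix]
  rfl

theorem charMinor_eq_zero_of_not_injective (b : ℕ) {m : Fin n → Fin (N + n)}
    (hm : ¬Function.Injective m) (U : Matrix (Fin N) (Fin N) ℂ) : charMinor b m U = 0 := by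
  obtain ⟨i, j, hij, hne⟩ := Function.not_injective_iff.mp hm
  rw [charMinor, det_zero_of_row_eq hne (by ext k; simp [hij]), mul_zero]

/-- The mean of `charMinor b m` over the unitary group. -/
noncomputable def charMoment (ℙ : Measure (unitaryGroup (Fin N) ℂ)) (b : ℕ)
    (m : Fin n → Fin (N + n)) : ℂ :=
  ∫ U, charMinor b m U.1 ∂ℙ

variable (ℙ : Measure (unitaryGroup (Fin N) ℂ)) [IsFiniteMeasure ℙ]

theorem integral_sum_charMinor (b : ℕ) (g : (Fin n → Fin (N + n)) → ℂ) (x : Fin n → ℂ) :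
    ∫ U : unitaryGroup (Fin N) ℂ,
        ∑ m : Fin n → Fin (N + n), g m * charMinor b m U.1 * ∏ i, x i ^ (m i : ℕ) ∂ℙ =
      ∑ m : Fin n → Fin (N + n), g m * charMoment ℙ b m * ∏ i, x i ^ (m i : ℕ) := by
  rw [integral_finsetSum]
  · exact Finset.sum_congr rfl fun m _ => by
      rw [integral_mul_const, integral_const_mul, charMoment]
  · exact fun m _ => integrable_of_continuous
      (by exact (continuous_const.mul (continuous_charMinor b m)).mul continuous_const) ℙ

theorem sum_charMoment_mul_prod_pow (b : ℕ) (x : Fin n → ℂ) :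
    ∑ m : Fin n → Fin (N + n), charMoment ℙ b m * ∏ i, x i ^ (m i : ℕ) =
      (vandermonde x).det * ∫ U : unitaryGroup (Fin N) ℂ, charWeight b x U.1 ∂ℙ := by
  simpa only [one_mul, sum_charMinor_mul_prod_pow, integral_const_mul] using
    (integral_sum_charMinor ℙ b (fun _ => 1) x).symm

theorem casimirWeight_eq_of_charMoment_ne_zero [ℙ.IsMulLeftInvariant] {b : ℕ} (hb : b ≤ n)
    {m : Fin n → Fin (N + n)} (hm : charMoment ℙ b m ≠ 0) :
    ∑ k : Fin n, casimirWeight N b (gapExponent N b k) = ∑ i, casimirWeight N b (m i) := by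
  obtain ⟨s, hs, hx⟩ := exists_infinite_sets_injective_norm_ne_one n
  have hzero := eq_zero_of_forall_sum_mul_prod_pow_eq_zero (c := fun m : Fin n → Fin (N + n) =>
    ((∑ k : Fin n, casimirWeight N b (gapExponent N b k) - ∑ i, casimirWeight N b (m i) : ℤ) : ℂ) *
      charMoment ℙ b m) s hs (fun x hxs => ?_) m
  · exact sub_eq_zero.mp (Int.cast_eq_zero.mp ((mul_eq_zero.mp hzero).resolve_right hm))
  · obtain ⟨hinj, hnorm⟩ := hx x hxs
    have hpointwise (U : unitaryGroup (Fin N) ℂ) := sum_casimirWeight_mul_charMinor hb hinj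
      fun i => det_scalar_sub_ne_zero_of_unitary U (hnorm i)
    rw [← integral_sum_charMinor]
    simp only [hpointwise]
    rw [integral_const_mul, integral_charWeight_mul_trace_eq_zero ℙ b hnorm, mul_zero]

theorem charMoment_eq_zero_of_notMem_range [ℙ.IsMulLeftInvariant] {b : ℕ} (hN : 0 < N)
    (hb : b ≤ n) {m : Fin n → Fin (N + n)}
    (hm : ∀ σ : Equiv.Perm (Fin n), gapEmbedding N b n ∘ σ ≠ m) : charMoment ℙ b m = 0 := by
  by_contra hne
  have hinj : Function.Injective m := by
    by_contra hinj
    exact hne (by simp only [charMoment, charMinor_eq_zero_of_not_injective b hinj, integral_zero])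
  obtain ⟨σ, hσ⟩ := exists_gapEmbedding_comp_perm_eq hN hb hinj
    (casimirWeight_eq_of_charMoment_ne_zero ℙ hb hne)
  exact hm σ hσ

theorem vandermonde_mul_integral_charWeight [ℙ.IsMulLeftInvariant] {b : ℕ} (hN : 0 < N)
    (hb : b ≤ n) (x : Fin n → ℂ) :
    (vandermonde x).det * ∫ U : unitaryGroup (Fin N) ℂ, charWeight b x U.1 ∂ℙ =
      charMoment ℙ b (gapEmbedding N b n) *
        (of fun i k : Fin n => x i ^ gapExponent N b k).det := by
  rw [← sum_charMoment_mul_prod_pow, ← det_transpose, det_apply, Finset.mul_sum]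
  symm
  refine Finset.sum_of_injOn (fun σ : Equiv.Perm (Fin n) => gapEmbedding N b n ∘ σ)
    (fun σ _ σ' _ h => Equiv.ext fun i => (gapEmbedding N b n).injective (congrFun h i))
    (fun _ _ => Finset.mem_coe.mpr (Finset.mem_univ _)) (fun m _ hm => ?_) fun σ _ => ?_
  · rw [charMoment_eq_zero_of_notMem_range ℙ hN hb fun σ hσ => hm ⟨σ, by simp, hσ⟩, zero_mul]
  · simp only [charMoment, charMinor_comp_perm, integral_const_mul, transpose_apply, of_apply,
      Units.smul_def, zsmul_eq_mul]
    rw [mul_left_comm, ← mul_assoc]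
    rfl

end Moments

section JacobiTrudi

variable {F : Type*} [Field F] {N n b : ℕ}

/-- The `N × N` Toeplitz matrix `(p_{b + r - j})` of the coefficients of a polynomial `p`, with
`p_l = 0` for `l < 0`: it is the Toeplitz matrix of the symbol `z⁻ᵇ p(z)` on the circle. -/
noncomputable def coeffToeplitz (N b : ℕ) (p : F[X]) : Matrix (Fin N) (Fin N) F :=
  of fun r j => (X ^ (j : ℕ) * p).coeff (b + r)

/-- The indices below `N + n` as the values of `gapExponent N b` followed by those of its gap. -/
noncomputable def gapEquiv (N : ℕ) (hb : b ≤ n) : Fin n ⊕ Fin N ≃ Fin (N + n) :=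
  Equiv.ofBijective (Sum.elim (gapEmbedding N b n) fun r => ⟨b + r, by omega⟩) <| by
    rw [Fintype.bijective_iff_injective_and_card]
    refine ⟨(gapEmbedding N b n).injective.sumElim (fun r s h => ?_) fun k r h => ?_,
      by simp; omega⟩
    · simpa [Fin.ext_iff] using h
    · simp only [gapEmbedding, gapExponent, Function.Embedding.coeFn_mk, Fin.mk.injEq] at h
      split_ifs at h <;> omega

/-- The indices below `N + n` as the first `n` followed by the last `N`. -/
def headTailEquiv (N n : ℕ) : Fin n ⊕ Fin N ≃ Fin (N + n) :=
  finSumFinEquiv.trans (finCongr (add_comm n N))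

theorem headTailEquiv_inr (r : Fin N) : (headTailEquiv N n (Sum.inr r) : ℕ) = n + r := rfl

theorem gapEmbedding_val (k : Fin n) : (gapEmbedding N b n k : ℕ) = gapExponent N b k := rfl

/-- The Vandermonde matrix with columns `0, …, N + n - 1`, extended by the last `N` unit rows. -/
def borderedVandermonde (N : ℕ) (x : Fin n → F) : Matrix (Fin n ⊕ Fin N) (Fin (N + n)) F :=
  fromRows (rectVandermonde x 1 (N + n))
    ((1 : Matrix (Fin (N + n)) (Fin (N + n)) F).submatrix (headTailEquiv N n ∘ Sum.inr) id)

/-- The coefficient matrix of `p, X p, …, X ^ (N - 1) p`, extended by the unit columns indexed by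
the values of `gapExponent N b`. -/
noncomputable def borderedShiftCoeff (N n b : ℕ) (p : F[X]) :
    Matrix (Fin (N + n)) (Fin n ⊕ Fin N) F :=
  fromCols ((1 : Matrix (Fin (N + n)) (Fin (N + n)) F).submatrix id (gapEmbedding N b n))
    (shiftCoeff N (N + n) p)

theorem det_borderedVandermonde (x : Fin n → F) :
    ((borderedVandermonde N x).submatrix id (headTailEquiv N n)).det = (vandermonde x).det := by
  have hblocks : (borderedVandermonde N x).submatrix id (headTailEquiv N n) =
      fromBlocks (vandermonde x)
        ((rectVandermonde x 1 (N + n)).submatrix id (headTailEquiv N n ∘ Sum.inr)) 0 1 := by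
    ext (i | r) (k | s)
    · simp [borderedVandermonde, rectVandermonde, headTailEquiv]
    · rfl
    · simp [borderedVandermonde, one_apply]
    · simp [borderedVandermonde, one_apply]
  rw [hblocks, det_fromBlocks_zero₂₁, det_one, mul_one]

theorem det_borderedShiftCoeff (hb : b ≤ n) (p : F[X]) :
    ((borderedShiftCoeff N n b p).submatrix (gapEquiv N hb) id).det =
      (coeffToeplitz N b p).det := by
  have hblocks : (borderedShiftCoeff N n b p).submatrix (gapEquiv N hb) id =
      fromBlocks 1 ((shiftCoeff N (N + n) p).submatrix (gapEmbedding N b n) id) 0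
        (coeffToeplitz N b p) := by
    ext (i | r) (k | s)
    · simp [borderedShiftCoeff, one_apply, gapEquiv]
    · rfl
    · exact one_apply_ne ((gapEquiv N hb).injective.ne Sum.inr_ne_inl)
    · rfl
  rw [hblocks, det_fromBlocks_zero₂₁, det_one, one_mul]

theorem rectVandermonde_mul_shiftCoeff_of_isRoot {p : F[X]} (hp : p.natDegree = n) {x : Fin n → F}
    (hx : ∀ i, p.IsRoot (x i)) :
    rectVandermonde x 1 (N + n) * shiftCoeff N (N + n) p = 0 := by
  ext i j
  have hdeg := natDegree_X_pow_mul_lt (p := p) (D := N + n) (by omega) j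
  calc (rectVandermonde x 1 (N + n) * shiftCoeff N (N + n) p) i j
      = ∑ l : Fin (N + n), x i ^ (l : ℕ) * (X ^ (j : ℕ) * p).coeff l := by
        simp [mul_apply, rectVandermonde, shiftCoeff]
    _ = 0 := by rw [sum_coeff_mul_pow hdeg, eval_mul, (hx i).eq_zero, mul_zero]

theorem det_shiftCoeff_tail {p : F[X]} (hmonic : p.Monic) (hp : p.natDegree = n) :
    ((shiftCoeff N (N + n) p).submatrix (headTailEquiv N n ∘ Sum.inr) id).det = 1 := by
  rw [det_of_isUpperTriangular]
  · refine Finset.prod_eq_one fun r _ => ?_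
    rw [← hmonic.coeff_natDegree, hp]
    simp [shiftCoeff, headTailEquiv_inr, coeff_X_pow_mul']
  · intro r j hjr
    have hjr : (j : ℕ) < r := hjr
    have hcoeff : (X ^ (j : ℕ) * p).coeff (n + r) = 0 := by
      rw [coeff_X_pow_mul', if_pos (by omega), coeff_eq_zero_of_natDegree_lt (by omega)]
    exact hcoeff

theorem borderedVandermonde_mul_borderedShiftCoeff {p : F[X]} (hp : p.natDegree = n)
    {x : Fin n → F} (hx : ∀ i, p.IsRoot (x i)) :
    borderedVandermonde N x * borderedShiftCoeff N n b p =
      fromBlocks (of fun i k : Fin n => x i ^ gapExponent N b k) 0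
        ((1 : Matrix _ _ F).submatrix (headTailEquiv N n ∘ Sum.inr) (gapEmbedding N b n))
        ((shiftCoeff N (N + n) p).submatrix (headTailEquiv N n ∘ Sum.inr) id) := by
  rw [borderedVandermonde, borderedShiftCoeff, fromRows_mul_fromCols,
    rectVandermonde_mul_shiftCoeff_of_isRoot hp hx]
  congr 1
  · ext i k
    simp [mul_apply, one_apply, rectVandermonde, gapEmbedding_val]
  · ext r k
    simp [mul_apply, one_apply]
  · ext r j
    simp [mul_apply, one_apply]

/- The first Jacobi–Trudi formula in disguise: the alternant over the Vandermonde determinant is a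
Schur polynomial of rectangular shape, and the Toeplitz entries are elementary symmetric. -/
theorem exists_vandermonde_mul_det_coeffToeplitz (hb : b ≤ n) :
    ∃ ε : F, ∀ x : Fin n → F,
      (vandermonde x).det * (ε * (coeffToeplitz N b (∏ i, (X - C (x i)))).det) =
        (of fun i k : Fin n => x i ^ gapExponent N b k).det := by
  refine ⟨(Equiv.Perm.sign ((headTailEquiv N n).trans (gapEquiv N hb).symm) : ℤ), fun x => ?_⟩
  have hmonic : (∏ i, (X - C (x i))).Monic := monic_prod_X_sub_C x _
  have hdeg : (∏ i, (X - C (x i))).natDegree = n := by simp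
  have hroot (i : Fin n) : (∏ i, (X - C (x i))).IsRoot (x i) := by
    rw [IsRoot, eval_prod]
    exact Finset.prod_eq_zero (Finset.mem_univ i) (by simp)
  have hdet := congrArg det
    (borderedVandermonde_mul_borderedShiftCoeff (N := N) (b := b) hdeg hroot)
  rw [det_fromBlocks_zero₁₂, det_shiftCoeff_tail hmonic hdeg, mul_one] at hdet
  rw [← hdet, ← det_borderedVandermonde (N := N), ← det_borderedShiftCoeff hb, ← det_permute,
    ← det_mul, submatrix_submatrix]
  congr 1
  have hcomp : gapEquiv N hb ∘ (headTailEquiv N n).trans (gapEquiv N hb).symm =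
      headTailEquiv N n := by
    ext; simp
  rw [hcomp]
  exact submatrix_mul_equiv _ _ id (headTailEquiv N n) id

end JacobiTrudi

section DetAeval

variable {m F : Type*} [Fintype m] [DecidableEq m] [Field F]

theorem det_aeval_C_mul (a : F) (p : F[X]) (A : Matrix m m F) :
    (aeval A (C a * p)).det = a ^ Fintype.card m * (aeval A p).det := by
  rw [map_mul, aeval_C, ← Algebra.smul_def, det_smul]

theorem det_aeval_prod {ι : Type*} (s : Finset ι) (f : ι → F[X]) (A : Matrix m m F) :
    (aeval A (∏ i ∈ s, f i)).det = ∏ i ∈ s, (aeval A (f i)).det :=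
  map_prod ((detMonoidHom : Matrix m m F →* F).comp (aeval A : F[X] →ₐ[F] Matrix m m F)) f s

theorem det_aeval_X_sub_C (a : F) (A : Matrix m m F) :
    (aeval A (X - C a)).det = (-1) ^ Fintype.card m * (scalar m a - A).det := by
  rw [← det_neg, neg_sub, map_sub, aeval_X, aeval_C]
  rfl

theorem exists_eq_C_mul_prod_X_sub_C [IsAlgClosed F] {n : ℕ} {p : F[X]} (hp : p.natDegree = n) :
    ∃ x : Fin n → F, p = C p.leadingCoeff * ∏ i, (X - C (x i)) := by
  obtain ⟨l, hl⟩ := Quot.exists_rep p.roots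
  have hl : (l : Multiset F) = p.roots := hl
  have hlength : l.length = n := by
    rw [← hp, (IsAlgClosed.splits p).natDegree_eq_card_roots, ← hl, Multiset.coe_card]
  subst hlength
  refine ⟨l.get, ?_⟩
  conv_lhs => rw [(IsAlgClosed.splits p).eq_prod_roots, ← hl]
  rw [Multiset.map_coe, Multiset.prod_coe, ← List.prod_ofFn]
  exact congrArg (fun l => C p.leadingCoeff * List.prod l)
    (List.ofFn_getElem_eq_map l fun a => X - C a).symm

theorem card_roots_charpoly [IsAlgClosed F] (A : Matrix m m F) :
    A.charpoly.roots.card = Fintype.card m := by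
  rw [← (IsAlgClosed.splits _).natDegree_eq_card_roots, charpoly_natDegree_eq_dim]

theorem det_aeval [IsAlgClosed F] (p : F[X]) (A : Matrix m m F) :
    (aeval A p).det = (A.charpoly.roots.map fun z => p.eval z).prod := by
  have hlinear (a : F) :
      (aeval A (X - C a)).det = (A.charpoly.roots.map fun z => z - a).prod := by
    have hfactor (z : F) : z - a = -1 * (a - z) := by ring
    rw [det_aeval_X_sub_C, ← eval_charpoly]
    conv_lhs => rw [(IsAlgClosed.splits A.charpoly).eq_prod_roots_of_monic (charpoly_monic A)]
    simp only [hfactor, Multiset.prod_map_mul, Multiset.map_const', Multiset.prod_replicate,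
      card_roots_charpoly, eval_multiset_prod, Multiset.map_map, Function.comp_def, eval_sub,
      eval_X, eval_C]
  obtain ⟨x, hx⟩ := exists_eq_C_mul_prod_X_sub_C (p := p) rfl
  rw [hx, det_aeval_C_mul, det_aeval_prod]
  simp only [hlinear, eval_mul, eval_C, eval_prod, eval_sub, eval_X, Multiset.prod_map_mul,
    Multiset.map_const', Multiset.prod_replicate, card_roots_charpoly, Multiset.prod_map_prod]

end DetAeval

section LaurentMoments

variable {N b : ℕ}

/-- The product of the Laurent polynomial `z⁻ᵇ p(z)` over the eigenvalues of `U`. -/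
noncomputable def laurentDet (b : ℕ) (p : ℂ[X]) (U : Matrix (Fin N) (Fin N) ℂ) : ℂ :=
  U.det⁻¹ ^ b * (aeval U p).det

theorem laurentDet_eq_prod_roots (b : ℕ) (p : ℂ[X]) (U : Matrix (Fin N) (Fin N) ℂ) :
    laurentDet b p U = (U.charpoly.roots.map fun z => z⁻¹ ^ b * p.eval z).prod := by
  rw [laurentDet, det_aeval, det_eq_prod_roots_charpoly, Multiset.prod_map_mul,
    Multiset.prod_map_pow, Multiset.prod_map_inv']

theorem laurentDet_C_mul (a : ℂ) (p : ℂ[X]) (U : Matrix (Fin N) (Fin N) ℂ) :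
    laurentDet b (C a * p) U = a ^ N * laurentDet b p U := by
  rw [laurentDet, det_aeval_C_mul, Fintype.card_fin, laurentDet, mul_left_comm]

theorem laurentDet_prod_X_sub_C {n : ℕ} (x : Fin n → ℂ) (U : Matrix (Fin N) (Fin N) ℂ) :
    laurentDet b (∏ i, (X - C (x i))) U = ((-1) ^ N) ^ n * charWeight b x U := by
  simp only [laurentDet, charWeight, det_aeval_prod, det_aeval_X_sub_C, Finset.prod_mul_distrib,
    Finset.prod_const, Finset.card_univ, Fintype.card_fin]
  ring

theorem coeffToeplitz_C_mul (a : ℂ) (p : ℂ[X]) :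
    coeffToeplitz N b (C a * p) = a • coeffToeplitz N b p := by
  ext r j
  simp only [coeffToeplitz, of_apply, Matrix.smul_apply, smul_eq_mul,
    mul_left_comm _ (C a), coeff_C_mul]

theorem coeffToeplitz_X_pow : coeffToeplitz N b (X ^ b : ℂ[X]) = 1 := by
  ext r j
  simp [coeffToeplitz, ← pow_add, coeff_X_pow, one_apply, Fin.ext_iff, add_comm b]

section Continuity

variable {T : Type*} [TopologicalSpace T] {P : T → ℂ[X]}

theorem continuous_det_coeffToeplitz (hP : ∀ l, Continuous fun t => (P t).coeff l) :
    Continuous fun t => (coeffToeplitz N b (P t)).det := by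
  refine Continuous.matrix_det (continuous_matrix fun r j => ?_)
  simp only [coeffToeplitz, of_apply, coeff_X_pow_mul']
  split_ifs
  exacts [hP _, continuous_const]

theorem continuous_integral_laurentDet [FirstCountableTopology T] [LocallyCompactSpace T]
    (ℙ : Measure (unitaryGroup (Fin N) ℂ)) [IsFiniteMeasure ℙ] {d : ℕ}
    (hdeg : ∀ t, (P t).natDegree < d) (hP : ∀ l, Continuous fun t => (P t).coeff l) :
    Continuous fun t => ∫ U, laurentDet b (P t) U.1 ∂ℙ := by
  have haeval : Continuous fun w : T × unitaryGroup (Fin N) ℂ => aeval w.2.1 (P w.1) := by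
    simp only [aeval_eq_sum_range' (hdeg _)]
    exact continuous_finsetSum _ fun l _ => ((hP l).comp continuous_fst).smul
      ((continuous_subtype_val.comp continuous_snd).pow l)
  have hweight : Continuous fun w : T × unitaryGroup (Fin N) ℂ => laurentDet b (P w.1) w.2.1 :=
    (((continuous_subtype_val.comp continuous_snd).matrix_det.inv₀
      fun w => det_ne_zero_of_unitary w.2).pow b).mul haeval.matrix_det
  simpa using continuous_parametric_integral_of_continuous (μ := ℙ) hweight isCompact_univ

end Continuity

theorem continuous_coeff_prod_X_sub_C {n : ℕ} (s : Finset (Fin n)) (l : ℕ) :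
    Continuous fun x : Fin n → ℂ => (∏ i ∈ s, (X - C (x i))).coeff l := by
  induction s using Finset.induction_on generalizing l with
  | empty => simpa using continuous_const
  | insert i s hi ih =>
    simp only [Finset.prod_insert hi, sub_mul, coeff_sub, coeff_C_mul]
    refine Continuous.sub ?_ ((continuous_apply i).mul (ih l))
    cases l with
    | zero => simpa using continuous_const
    | succ l => simpa only [coeff_X_mul] using ih l

theorem dense_setOf_injective (n : ℕ) : Dense {x : Fin n → ℂ | Function.Injective x} := by
  have hset : {x : Fin n → ℂ | Function.Injective x} =
      ⋂ p : {p : Fin n × Fin n // p.1 ≠ p.2}, {x | x p.1.1 ≠ x p.1.2} := by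
    ext x
    simp only [Set.mem_ofPred_eq, Set.mem_iInter, Function.Injective, Subtype.forall, Prod.forall]
    exact forall₂_congr fun i j => not_imp_not.symm
  rw [hset]
  refine dense_iInter_of_isOpen (fun p => isOpen_ne_fun (by fun_prop) (by fun_prop)) fun p => ?_
  let H : Submodule ℂ (Fin n → ℂ) :=
    LinearMap.ker (LinearMap.proj (R := ℂ) (φ := fun _ => ℂ) p.1.1 - LinearMap.proj p.1.2)
  have hH : {x : Fin n → ℂ | x p.1.1 ≠ x p.1.2} = (H : Set (Fin n → ℂ))ᶜ := by
    ext x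
    simp [H, sub_eq_zero]
  rw [hH, ← interior_eq_empty_iff_dense_compl, ← Set.not_nonempty_iff_eq_empty]
  intro hne
  have htop := H.eq_top_of_nonempty_interior' hne
  have : Pi.single p.1.1 1 ∈ H := htop ▸ Submodule.mem_top
  simp [H, p.2] at this

variable (ℙ : Measure (unitaryGroup (Fin N) ℂ))

theorem exists_integral_laurentDet_prod_X_sub_C [IsFiniteMeasure ℙ] [ℙ.IsMulLeftInvariant]
    (hN : 0 < N) {n : ℕ} (hb : b ≤ n) :
    ∃ c : ℂ, ∀ x : Fin n → ℂ, ∫ U, laurentDet b (∏ i, (X - C (x i))) U.1 ∂ℙ =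
      c * (coeffToeplitz N b (∏ i, (X - C (x i)))).det := by
  obtain ⟨ε, hε⟩ := exists_vandermonde_mul_det_coeffToeplitz (F := ℂ) (N := N) hb
  refine ⟨((-1) ^ N) ^ n * (charMoment ℙ b (gapEmbedding N b n) * ε), congrFun ?_⟩
  have hcoeff := continuous_coeff_prod_X_sub_C (Finset.univ : Finset (Fin n))
  refine Continuous.ext_on (dense_setOf_injective n)
    (continuous_integral_laurentDet ℙ (d := n + 1) (fun x => by simp) hcoeff)
    (continuous_const.mul (continuous_det_coeffToeplitz hcoeff)) fun x hx => ?_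
  have hvandermonde : (vandermonde x).det ≠ 0 := det_vandermonde_ne_zero_iff.mpr hx
  have hmoment := vandermonde_mul_integral_charWeight ℙ hN hb x
  simp only [laurentDet_prod_X_sub_C, integral_const_mul]
  rw [mul_assoc]
  congr 1
  apply mul_left_cancel₀ hvandermonde
  rw [hmoment, ← hε]
  ring

theorem exists_integral_laurentDet [IsFiniteMeasure ℙ] [ℙ.IsMulLeftInvariant] (hN : 0 < N) {n : ℕ}
    (hb : b ≤ n) : ∃ c : ℂ, ∀ p : ℂ[X], p.natDegree ≤ n →
      ∫ U, laurentDet b p U.1 ∂ℙ = c * (coeffToeplitz N b p).det := by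
  obtain ⟨c, hc⟩ := exists_integral_laurentDet_prod_X_sub_C ℙ hN hb
  have hexact (p : ℂ[X]) (hp : p.natDegree = n) :
      ∫ U, laurentDet b p U.1 ∂ℙ = c * (coeffToeplitz N b p).det := by
    obtain ⟨x, hx⟩ := exists_eq_C_mul_prod_X_sub_C hp
    rw [hx, coeffToeplitz_C_mul, det_smul, Fintype.card_fin, mul_left_comm, ← hc]
    simp only [laurentDet_C_mul, integral_const_mul]
  refine ⟨c, fun p hp => ?_⟩
  have hcoeff (l : ℕ) : Continuous fun t : ℂ => (p + C t * X ^ n).coeff l := by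
    simp only [coeff_add, coeff_C_mul]
    fun_prop
  have hdeg (t : ℂ) : (p + C t * X ^ n).natDegree ≤ n :=
    natDegree_add_le_of_degree_le hp (natDegree_C_mul_X_pow_le t n)
  have hfun := Continuous.ext_on (dense_compl_singleton (-p.coeff n))
    (continuous_integral_laurentDet ℙ (b := b) (fun t => Nat.lt_succ_of_le (hdeg t)) hcoeff)
    (continuous_const.mul (continuous_det_coeffToeplitz (N := N) (b := b) hcoeff)) fun t ht =>
      hexact _ ((hdeg t).antisymm (le_natDegree_of_ne_zero ?_))
  · simpa using congrFun hfun 0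
  · simp only [coeff_add, coeff_C_mul, coeff_X_pow_self, mul_one]
    exact fun h => ht (eq_neg_of_add_eq_zero_right h)

theorem integral_laurentDet [IsProbabilityMeasure ℙ] [ℙ.IsMulLeftInvariant] (hN : 0 < N)
    (p : ℂ[X]) : ∫ U, laurentDet b p U.1 ∂ℙ = (coeffToeplitz N b p).det := by
  obtain ⟨c, hc⟩ := exists_integral_laurentDet ℙ hN (le_max_left b p.natDegree)
  have hone := hc (X ^ b) (by simp)
  have hweight (U : unitaryGroup (Fin N) ℂ) : laurentDet b (X ^ b) U.1 = 1 := by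
    rw [laurentDet, map_pow, aeval_X, det_pow, ← mul_pow,
      inv_mul_cancel₀ (det_ne_zero_of_unitary U), one_pow]
  simp only [hweight, coeffToeplitz_X_pow, det_one, mul_one, integral_const, probReal_univ,
    one_smul] at hone
  rw [hc p (le_max_right _ _), ← hone, one_mul]

end LaurentMoments

instance fact_two_pi_pos : Fact (0 < 2 * π) := ⟨two_pi_pos⟩

section Symbols

variable {N : ℕ}

theorem norm_eq_one_of_mem_roots_charpoly (U : unitaryGroup (Fin N) ℂ) {z : ℂ}
    (hz : z ∈ U.1.charpoly.roots) : ‖z‖ = 1 := by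
  by_contra hnorm
  refine det_scalar_sub_ne_zero_of_unitary U hnorm ?_
  rw [← eval_charpoly]
  exact (mem_roots'.mp hz).2

theorem coe_toCircle_arg {z : ℂ} (hz : ‖z‖ = 1) :
    (AddCircle.toCircle (z.arg : AddCircle (2 * π)) : ℂ) = z := by
  have hpolar := Complex.norm_mul_exp_arg_mul_I z
  rw [hz, Complex.ofReal_one, one_mul] at hpolar
  rwa [AddCircle.toCircle_apply_mk, div_self two_pi_pos.ne', one_mul, Circle.coe_exp]

/-- The product `∏ⱼ f(θⱼ)` over the eigenvalues `e^{iθⱼ}` of `U`, counted with multiplicity. -/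
noncomputable def eigenProd (f : AddCircle (2 * π) → ℂ) (U : unitaryGroup (Fin N) ℂ) : ℂ :=
  (U.1.charpoly.roots.map fun z => f z.arg).prod

theorem norm_eigenProd_le {f : AddCircle (2 * π) → ℂ} {M : ℝ} (hM : ∀ x, ‖f x‖ ≤ M)
    (U : unitaryGroup (Fin N) ℂ) : ‖eigenProd f U‖ ≤ M ^ N := by
  calc ‖eigenProd f U‖ = (U.1.charpoly.roots.map fun z => ‖f z.arg‖).prod := by
        exact (map_multiset_prod (normHom : ℂ →*₀ ℝ) _).trans
          (by rw [Multiset.map_map]; rfl)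
    _ ≤ (U.1.charpoly.roots.map fun _ => M).prod :=
        Multiset.prod_map_le_prod_map₀ _ _ (fun _ _ => norm_nonneg _) fun _ _ => hM _
    _ = M ^ N := by
        rw [Multiset.map_const', Multiset.prod_replicate, card_roots_charpoly, Fintype.card_fin]

/-- The Toeplitz matrix `(f̂(r - j))` of a symbol `f` on the circle. -/
noncomputable def fourierToeplitz (N : ℕ) (f : AddCircle (2 * π) → ℂ) :
    Matrix (Fin N) (Fin N) ℂ :=
  of fun r j => fourierCoeff f ((r : ℤ) - j)

/-- The Laurent polynomial `z⁻ᵇ p(z)` as a function of the angle of `z`. -/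
noncomputable def laurentSymbol (b : ℕ) (p : ℂ[X]) : C(AddCircle (2 * π), ℂ) :=
  fourier (-(b : ℤ)) * p.toAddCircle

theorem laurentSymbol_arg (b : ℕ) (p : ℂ[X]) {z : ℂ} (hz : ‖z‖ = 1) :
    laurentSymbol b p z.arg = z⁻¹ ^ b * p.eval z := by
  have hcircle := coe_toCircle_arg hz
  rw [laurentSymbol, ContinuousMap.mul_apply]
  congr 1
  · rw [fourier_apply, neg_smul, AddCircle.toCircle_neg, natCast_zsmul, AddCircle.toCircle_nsmul,
      Circle.coe_inv, Circle.coe_pow, hcircle, inv_pow]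
  · rw [toAddCircle, aeval_continuousMap_apply]
    simp [hcircle]

theorem eigenProd_laurentSymbol (b : ℕ) (p : ℂ[X]) (U : unitaryGroup (Fin N) ℂ) :
    eigenProd (laurentSymbol b p) U = laurentDet b p U.1 := by
  rw [laurentDet_eq_prod_roots, eigenProd]
  exact congrArg Multiset.prod (Multiset.map_congr rfl fun z hz =>
    laurentSymbol_arg b p (norm_eq_one_of_mem_roots_charpoly U hz))

theorem fourierCoeff_laurentSymbol (b : ℕ) (p : ℂ[X]) (k : ℤ) :
    fourierCoeff (laurentSymbol b p) k = if 0 ≤ k + b then p.coeff (k + b).natAbs else 0 := by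
  rw [← fourierCoeff_toAddCircle, fourierCoeff, fourierCoeff]
  congr 1
  ext x
  rw [laurentSymbol, ContinuousMap.mul_apply, neg_add, fourier_add, smul_eq_mul, smul_eq_mul,
    mul_assoc]

theorem fourierToeplitz_laurentSymbol (b : ℕ) (p : ℂ[X]) :
    fourierToeplitz N (laurentSymbol b p) = coeffToeplitz N b p := by
  ext r j
  simp only [coeffToeplitz, fourierToeplitz, of_apply, fourierCoeff_laurentSymbol, coeff_X_pow_mul']
  by_cases h : (j : ℕ) ≤ b + r
  · rw [if_pos h, if_pos (by omega)]
    congr 1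
    omega
  · rw [if_neg h, if_neg (by omega)]

theorem exists_eq_laurentSymbol {g : C(AddCircle (2 * π), ℂ)}
    (hg : g ∈ Submodule.span ℂ (Set.range fourier)) : ∃ b p, g = laurentSymbol b p := by
  induction hg using Submodule.span_induction with
  | mem g h =>
    obtain ⟨n, rfl⟩ := h
    obtain ⟨m, rfl | rfl⟩ := n.eq_nat_or_neg
    · exact ⟨0, X ^ m, by ext; simp [laurentSymbol, toAddCircle_X_pow_eq_fourier]⟩
    · exact ⟨m, 1, by simp [laurentSymbol]⟩
  | zero => exact ⟨0, 0, by simp [laurentSymbol]⟩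
  | add f g _ _ hf hg =>
    obtain ⟨b, p, rfl⟩ := hf
    obtain ⟨c, q, rfl⟩ := hg
    refine ⟨b + c, X ^ c * p + X ^ b * q, ?_⟩
    have hcancel (m : ℕ) (x : AddCircle (2 * π)) :
        fourier (-(m : ℤ)) x * fourier (m : ℤ) x = 1 := by
      rw [← fourier_add, neg_add_cancel, fourier_zero]
    ext x
    simp only [laurentSymbol, map_add, map_mul, toAddCircle_X_pow_eq_fourier,
      ContinuousMap.add_apply, ContinuousMap.mul_apply, Nat.cast_add, neg_add, fourier_add]
    linear_combination (-(fourier (-(b : ℤ)) x) * toAddCircle p x) * hcancel c x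
      - (fourier (-(c : ℤ)) x) * toAddCircle q x * hcancel b x
  | smul c f _ hf =>
    obtain ⟨b, p, rfl⟩ := hf
    refine ⟨b, C c * p, ?_⟩
    rw [laurentSymbol, laurentSymbol, ← smul_eq_C_mul, map_smul, mul_smul_comm]

end Symbols

section HeineSzego

variable {N : ℕ} {ℙ : Measure (unitaryGroup (Fin N) ℂ)}

/-- The symbol `f` satisfies the Heine–Szegő identity `E ∏ⱼ f(θⱼ) = det (f̂(r - j))`. -/
structure HeineSzego (ℙ : Measure (unitaryGroup (Fin N) ℂ)) (f : AddCircle (2 * π) → ℂ) :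
    Prop where
  measurable : Measurable f
  measurable_eigenProd : Measurable (eigenProd f : unitaryGroup (Fin N) ℂ → ℂ)
  integral_eigenProd : ∫ U, eigenProd f U ∂ℙ = (fourierToeplitz N f).det

theorem tendsto_fourierToeplitz {f : ℕ → AddCircle (2 * π) → ℂ} {g : AddCircle (2 * π) → ℂ}
    {M : ℝ} (hf : ∀ n, Measurable (f n)) (hM : ∀ n x, ‖f n x‖ ≤ M)
    (hlim : ∀ x, Tendsto (fun n => f n x) atTop (nhds (g x))) :
    Tendsto (fun n => fourierToeplitz N (f n)) atTop (nhds (fourierToeplitz N g)) := by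
  refine tendsto_pi_nhds.mpr fun r => tendsto_pi_nhds.mpr fun j => ?_
  simp only [fourierToeplitz, of_apply, fourierCoeff]
  refine tendsto_integral_of_dominated_convergence (fun _ => M)
    (fun n => ((map_continuous (fourier _)).measurable.smul (hf n)).aestronglyMeasurable)
    (integrable_const _) (fun n => ae_of_all _ fun x => ?_)
    (ae_of_all _ fun x => (hlim x).const_smul _)
  rw [norm_smul, fourier_apply, Circle.norm_coe, one_mul]
  exact hM n x

namespace HeineSzego

theorem of_tendsto [IsFiniteMeasure ℙ] {f : ℕ → AddCircle (2 * π) → ℂ}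
    {g : AddCircle (2 * π) → ℂ} {M : ℝ} (hf : ∀ n, HeineSzego ℙ (f n)) (hM : ∀ n x, ‖f n x‖ ≤ M)
    (hlim : ∀ x, Tendsto (fun n => f n x) atTop (nhds (g x))) : HeineSzego ℙ g := by
  have hprod (U : unitaryGroup (Fin N) ℂ) :
      Tendsto (fun n => eigenProd (f n) U) atTop (nhds (eigenProd g U)) :=
    tendsto_multiset_prod _ fun z _ => hlim _
  have hintegral : Tendsto (fun n => ∫ U, eigenProd (f n) U ∂ℙ) atTop
      (nhds (∫ U, eigenProd g U ∂ℙ)) :=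
    tendsto_integral_of_dominated_convergence (fun _ => M ^ N)
      (fun n => (hf n).measurable_eigenProd.aestronglyMeasurable) (integrable_const _)
      (fun n => ae_of_all _ fun U => norm_eigenProd_le (hM n) U) (ae_of_all _ hprod)
  have hdet : Tendsto (fun n => (fourierToeplitz N (f n)).det) atTop
      (nhds (fourierToeplitz N g).det) :=
    (continuous_id.matrix_det.tendsto _).comp
      (tendsto_fourierToeplitz (fun n => (hf n).measurable) hM hlim)
  exact
    { measurable := measurable_of_tendsto_metrizable (fun n => (hf n).measurable)
        (tendsto_pi_nhds.mpr hlim)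
      measurable_eigenProd := measurable_of_tendsto_metrizable
        (fun n => (hf n).measurable_eigenProd) (tendsto_pi_nhds.mpr hprod)
      integral_eigenProd := tendsto_nhds_unique hintegral
        (hdet.congr fun n => (hf n).integral_eigenProd.symm) }

variable [IsProbabilityMeasure ℙ] [ℙ.IsMulLeftInvariant]

theorem laurentSymbol (hN : 0 < N) (b : ℕ) (p : ℂ[X]) :
    HeineSzego ℙ (laurentSymbol b p) where
  measurable := (map_continuous _).measurable
  measurable_eigenProd := by
    have hval : Continuous fun U : unitaryGroup (Fin N) ℂ => U.1 := continuous_subtype_val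
    refine Continuous.measurable ?_
    simp only [funext (eigenProd_laurentSymbol b p), laurentDet]
    exact ((hval.matrix_det.inv₀ det_ne_zero_of_unitary).pow b).mul
      (p.continuous_aeval.comp hval).matrix_det
  integral_eigenProd := by
    simp only [eigenProd_laurentSymbol, fourierToeplitz_laurentSymbol, integral_laurentDet ℙ hN]

theorem continuousMap (hN : 0 < N) (g : C(AddCircle (2 * π), ℂ)) : HeineSzego ℙ g := by
  have hg : g ∈ closure (Submodule.span ℂ (Set.range (@fourier (2 * π))) : Set _) := by
    rw [← Submodule.topologicalClosure_coe, span_fourier_closure_eq_top]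
    trivial
  obtain ⟨u, hu, hlim⟩ := mem_closure_iff_seq_limit.mp hg
  choose b p hbp using fun n => exists_eq_laurentSymbol (hu n)
  obtain ⟨M, hM⟩ := (Metric.isBounded_range_of_tendsto u hlim).exists_norm_le
  refine of_tendsto (f := fun n => u n) (M := M) (fun n => ?_)
    (fun n x => ((u n).norm_coe_le_norm x).trans (hM _ ⟨n, rfl⟩))
    fun x => ((ContinuousMap.evalCLM ℂ x).continuous.tendsto g).comp hlim
  rw [hbp n]
  exact laurentSymbol hN (b n) (p n)

theorem one_add_indicator_diff (hN : 0 < N) {A B : Set (AddCircle (2 * π))} (hA : IsClosed A)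
    (hB : IsClosed B) (hBA : B ⊆ A) (s : ℂ) :
    HeineSzego ℙ fun x => 1 + s * (A \ B).indicator 1 x := by
  have hle {E : Set (AddCircle (2 * π))} (hE : IsClosed E) (n x) :
      ‖((hE.apprSeq n x : ℝ) : ℂ)‖ ≤ 1 := by
    rw [Complex.norm_real, NNReal.norm_eq]
    exact HasOuterApproxClosed.apprSeq_apply_le_one hE n x
  have hlim {E : Set (AddCircle (2 * π))} (hE : IsClosed E) (x) :
      Tendsto (fun n => ((hE.apprSeq n x : ℝ) : ℂ)) atTop (nhds (E.indicator 1 x)) := by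
    have hcoe : Continuous fun t : NNReal => ((t : ℝ) : ℂ) := by fun_prop
    have hvalue :
        (((E.indicator (fun _ => 1) x : NNReal) : ℝ) : ℂ) = E.indicator 1 x := by
      by_cases hx : x ∈ E <;> simp [hx]
    rw [← hvalue]
    exact (hcoe.tendsto _).comp
      (tendsto_pi_nhds.mp (HasOuterApproxClosed.tendsto_apprSeq hE) x)
  refine of_tendsto (f := fun n x => 1 + s * ((hA.apprSeq n x : ℝ) - (hB.apprSeq n x : ℝ)))
    (M := 1 + ‖s‖ * (1 + 1)) (fun n => ?_) (fun n x => ?_) fun x => ?_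
  · exact continuousMap hN
      ⟨fun x => 1 + s * ((hA.apprSeq n x : ℝ) - (hB.apprSeq n x : ℝ)), by fun_prop⟩
  · refine (norm_add_le _ _).trans ?_
    rw [norm_one, norm_mul]
    gcongr
    exact (norm_sub_le _ _).trans (add_le_add (hle hA n x) (hle hB n x))
  · rw [Set.indicator_sdiff hBA]
    exact (((hlim hA x).sub (hlim hB x)).const_mul s).const_add 1

end HeineSzego

end HeineSzego

section Arcs

/-- The half-open arc of length `L` starting at angle `a`. -/
def circleArc (a L : ℝ) : Set (AddCircle (2 * π)) :=
  (fun x : ℝ => (x : AddCircle (2 * π))) '' Set.Ico a (a + L)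

variable {a L : ℝ}

theorem coe_mem_circleArc {c x : ℝ} (hac : Set.Ico a (a + L) ⊆ Set.Ico c (c + 2 * π))
    (hx : x ∈ Set.Ico c (c + 2 * π)) :
    (x : AddCircle (2 * π)) ∈ circleArc a L ↔ x ∈ Set.Ico a (a + L) := by
  refine ⟨?_, fun h => ⟨x, h, rfl⟩⟩
  rintro ⟨y, hy, hyx⟩
  rwa [← (AddCircle.coe_eq_coe_iff_of_mem_Ico (hac hy) hx).mp hyx]

theorem circleArc_eq_sdiff (hL : L < 2 * π) :
    circleArc a L = (fun x : ℝ => (x : AddCircle (2 * π))) '' Set.Icc a (a + L) \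
      {((a + L : ℝ) : AddCircle (2 * π))} := by
  ext x
  constructor
  · rintro ⟨y, hy, rfl⟩
    refine ⟨⟨y, Set.Ico_subset_Icc_self hy, rfl⟩, fun h => hy.2.ne ?_⟩
    exact (AddCircle.coe_eq_coe_iff_of_mem_Ico ⟨hy.1, by linarith [hy.2]⟩
      ⟨hy.1.trans hy.2.le, by linarith⟩).mp h
  · rintro ⟨⟨y, hy, rfl⟩, hne⟩
    exact ⟨y, ⟨hy.1, hy.2.lt_of_ne fun h => hne (congrArg _ h)⟩, rfl⟩

theorem isClosed_image_Icc : IsClosed ((fun x : ℝ => (x : AddCircle (2 * π))) '' Set.Icc a L) :=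
  (isCompact_Icc.image (AddCircle.continuous_mk' _)).isClosed

theorem measurableSet_circleArc (hL : L < 2 * π) : MeasurableSet (circleArc a L) := by
  rw [circleArc_eq_sdiff hL]
  exact isClosed_image_Icc.measurableSet.diff (measurableSet_singleton _)

open Classical in
theorem prod_map_one_add_mul_indicator {α R : Type*} [CommSemiring R] (t : Multiset α) (A : Set α)
    (s : R) :
    (t.map fun x => 1 + s * A.indicator 1 x).prod = (1 + s) ^ (t.filter (· ∈ A)).card := by
  induction t using Multiset.induction_on with
  | empty => simp
  | cons x t ih => by_cases hx : x ∈ A <;> simp [hx, ih, pow_succ']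

end Arcs

section Counts

variable {N : ℕ} {a L : ℝ}

theorem eigenAngles_eq_map_toIcoMod (U : unitaryGroup (Fin N) ℂ) :
    eigenAngles N U = U.1.charpoly.roots.map fun z => toIcoMod two_pi_pos 0 z.arg := by
  refine Multiset.map_congr rfl fun z _ => ?_
  have hlower := Complex.neg_pi_lt_arg z
  have hupper := Complex.arg_le_pi z
  symm
  split_ifs with hz
  · exact (toIcoMod_eq_self two_pi_pos).mpr ⟨hz, by linarith⟩
  · rw [← toIcoMod_add_right]
    exact (toIcoMod_eq_self two_pi_pos).mpr ⟨by linarith, by linarith⟩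

theorem countAngles_le (U : unitaryGroup (Fin N) ℂ) (A : Set ℝ) : countAngles N U A ≤ N := by
  classical
  refine (Multiset.card_le_card (Multiset.filter_le _ _)).trans ?_
  rw [eigenAngles, Multiset.card_map, card_roots_charpoly, Fintype.card_fin]

theorem eigenProd_circleArc (ha : 0 ≤ a) (haL : a + L ≤ 2 * π) (s : ℂ)
    (U : unitaryGroup (Fin N) ℂ) :
    eigenProd (fun x => 1 + s * (circleArc a L).indicator 1 x) U =
      (1 + s) ^ countAngles N U (Set.Ico a (a + L)) := by
  have hsub : Set.Ico a (a + L) ⊆ Set.Ico 0 (0 + 2 * π) :=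
    Set.Ico_subset_Ico ha (by simpa using haL)
  have hcoe (z : ℂ) : (z.arg : AddCircle (2 * π)) = (toIcoMod two_pi_pos 0 z.arg : ℝ) := by
    rw [toIcoMod, AddCircle.coe_sub, AddCircle.coe_zsmul, AddCircle.coe_period, smul_zero,
      sub_zero]
  have hindicator (z : ℂ) : (circleArc a L).indicator (1 : AddCircle (2 * π) → ℂ) z.arg =
      (Set.Ico a (a + L)).indicator 1 (toIcoMod two_pi_pos 0 z.arg) := by
    have hmem := coe_mem_circleArc hsub (toIcoMod_mem_Ico two_pi_pos 0 z.arg)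
    rw [← hcoe] at hmem
    by_cases hz : toIcoMod two_pi_pos 0 z.arg ∈ Set.Ico a (a + L)
    · rw [Set.indicator_of_mem (hmem.mpr hz), Set.indicator_of_mem hz]
      rfl
    · rw [Set.indicator_of_notMem (mt hmem.mp hz), Set.indicator_of_notMem hz]
  rw [countAngles, eigenAngles_eq_map_toIcoMod, eigenProd]
  simp only [hindicator]
  rw [← prod_map_one_add_mul_indicator, Multiset.map_map]
  rfl

theorem heineSzego_circleArc {ℙ : Measure (unitaryGroup (Fin N) ℂ)} [IsProbabilityMeasure ℙ]
    [ℙ.IsMulLeftInvariant] (hN : 0 < N) (hL : 0 ≤ L) (hL' : L < 2 * π) (s : ℂ) :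
    HeineSzego ℙ fun x => 1 + s * (circleArc a L).indicator 1 x := by
  rw [circleArc_eq_sdiff hL']
  exact .one_add_indicator_diff hN isClosed_image_Icc isClosed_singleton
    (Set.singleton_subset_iff.mpr ⟨a + L, ⟨by linarith, le_rfl⟩, rfl⟩) s

theorem measurable_countAngles (ℙ : Measure (unitaryGroup (Fin N) ℂ)) [IsProbabilityMeasure ℙ]
    [ℙ.IsMulLeftInvariant] (hN : 0 < N) (ha : 0 ≤ a) (haL : a + L ≤ 2 * π) (hL : 0 ≤ L)
    (hL' : L < 2 * π) : Measurable fun U => countAngles N U (Set.Ico a (a + L)) := by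
  have hpow := (heineSzego_circleArc (ℙ := ℙ) (a := a) hN hL hL' 1).measurable_eigenProd
  simp only [funext (eigenProd_circleArc ha haL 1)] at hpow
  have hinj : Function.Injective fun n : ℕ => (1 + 1 : ℂ) ^ n := by
    intro m n h
    simp only [one_add_one_eq_two] at h
    have hnat : 2 ^ m = 2 ^ n := by exact_mod_cast h
    exact Nat.pow_right_injective le_rfl hnat
  exact ((measurable_of_countable _).measurableEmbedding hinj).measurable_comp_iff.mp hpow

end Counts

section Positivity

variable {N : ℕ}

theorem fourierToeplitz_one_add_mul {g : AddCircle (2 * π) → ℂ}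
    (hg : Integrable g AddCircle.haarAddCircle) (s : ℂ) :
    fourierToeplitz N (fun x => 1 + s * g x) = 1 + s • fourierToeplitz N g := by
  have hadd : (fun x => 1 + s * g x) = (fourier 0 : AddCircle (2 * π) → ℂ) + fun x => s * g x := by
    ext x
    simp
  ext r j
  simp only [fourierToeplitz, of_apply, Matrix.add_apply, Matrix.smul_apply]
  rw [hadd, fourierCoeff.add (integrable_of_continuous (map_continuous _) _) (hg.const_mul s),
    Pi.add_apply, fourierCoeff_fourier, fourierCoeff.const_mul, smul_eq_mul, Matrix.one_apply,
    Pi.single_apply]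
  simp only [sub_eq_zero, Nat.cast_inj, Fin.ext_iff]

theorem fourierCoeff_ofReal_neg {T : ℝ} [Fact (0 < T)] (f : AddCircle T → ℝ) (k : ℤ) :
    fourierCoeff (fun x => (f x : ℂ)) (-k) = star (fourierCoeff (fun x => (f x : ℂ)) k) := by
  rw [fourierCoeff, fourierCoeff, RCLike.star_def, ← integral_conj]
  simp only [smul_eq_mul, map_mul, Complex.conj_ofReal, ← fourier_neg]

theorem star_dotProduct_fourierToeplitz_mulVec {f : AddCircle (2 * π) → ℂ}
    (hf : Integrable f AddCircle.haarAddCircle) (v : Fin N → ℂ) :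
    star v ⬝ᵥ fourierToeplitz N f *ᵥ v =
      ∫ x, f x * (‖∑ j : Fin N, v j * fourier (j : ℤ) x‖ ^ 2 : ℝ) ∂AddCircle.haarAddCircle := by
  have hpoint (x : AddCircle (2 * π)) : f x * (‖∑ j : Fin N, v j * fourier (j : ℤ) x‖ ^ 2 : ℝ) =
      ∑ r : Fin N, ∑ j : Fin N, star (v r) * v j * (fourier (-((r : ℤ) - j)) x • f x) := by
    rw [Complex.ofReal_pow, ← Complex.conj_mul', map_sum, Finset.sum_mul_sum, Finset.mul_sum]
    refine Finset.sum_congr rfl fun r _ => ?_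
    rw [Finset.mul_sum]
    refine Finset.sum_congr rfl fun j _ => ?_
    rw [map_mul, ← fourier_neg, neg_sub, sub_eq_add_neg, fourier_add, smul_eq_mul, RCLike.star_def]
    ring
  have hint (r j : Fin N) :
      Integrable (fun x => star (v r) * v j * (fourier (-((r : ℤ) - j)) x • f x))
        AddCircle.haarAddCircle := (hf.fourier_smul _).const_mul _
  simp only [hpoint]
  rw [integral_finsetSum _ fun r _ => integrable_finsetSum _ fun j _ => hint r j]
  simp only [integral_finsetSum _ fun j _ => hint _ j, integral_const_mul, dotProduct, mulVec,
    fourierToeplitz, of_apply, fourierCoeff, Pi.star_apply, Finset.mul_sum]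
  exact Finset.sum_congr rfl fun r _ => Finset.sum_congr rfl fun j _ => by ring

open scoped ComplexOrder in
theorem posSemidef_fourierToeplitz {f : AddCircle (2 * π) → ℝ}
    (hf : Integrable f AddCircle.haarAddCircle) (hpos : ∀ x, 0 ≤ f x) :
    (fourierToeplitz N fun x => (f x : ℂ)).PosSemidef := by
  refine .of_dotProduct_mulVec_nonneg ?_ fun v => ?_
  · ext r j
    rw [conjTranspose_apply, fourierToeplitz, of_apply, of_apply, ← fourierCoeff_ofReal_neg,
      neg_sub]
  · have hfC : Integrable (fun x => (f x : ℂ)) AddCircle.haarAddCircle := hf.ofReal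
    rw [star_dotProduct_fourierToeplitz_mulVec hfC]
    simp only [← Complex.ofReal_mul]
    rw [integral_complex_ofReal]
    exact Complex.zero_le_real.mpr
      (integral_nonneg fun x => mul_nonneg (hpos x) (sq_nonneg _))

open scoped ComplexOrder in
theorem posSemidef_one_sub_fourierToeplitz {f : AddCircle (2 * π) → ℝ}
    (hf : Integrable f AddCircle.haarAddCircle) (hle : ∀ x, f x ≤ 1) :
    (1 - fourierToeplitz N fun x => (f x : ℂ)).PosSemidef := by
  have hfC : Integrable (fun x => (f x : ℂ)) AddCircle.haarAddCircle := hf.ofReal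
  have hsub : (fun x => ((1 - f x : ℝ) : ℂ)) = fun x => 1 + (-1) * (f x : ℂ) := by
    ext x
    push_cast
    ring
  have h := posSemidef_fourierToeplitz (N := N) ((integrable_const (1 : ℝ)).sub hf)
    fun x => sub_nonneg.mpr (hle x)
  simp only [Pi.sub_apply] at h
  rwa [hsub, fourierToeplitz_one_add_mul hfC, neg_one_smul, ← sub_eq_add_neg] at h

end Positivity

section Spectral

variable {m : Type*} [Fintype m] [DecidableEq m] {K : Matrix m m ℂ}

theorem det_one_add_smul_eq_prod_eigenvalues (hK : K.IsHermitian) (s : ℂ) :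
    (1 + s • K).det = ∏ i, (1 + s * (hK.eigenvalues i : ℂ)) := by
  have haeval : aeval K (1 + C s * X) = 1 + s • K := by
    rw [map_add, map_one, map_mul, aeval_C, aeval_X, ← Algebra.smul_def]
  rw [← haeval, det_aeval, hK.roots_charpoly_eq_eigenvalues, Multiset.map_map]
  simp

theorem trace_mul_self_eq_sum_eigenvalues_sq (hK : K.IsHermitian) :
    (K * K).trace = ∑ i, (hK.eigenvalues i : ℂ) ^ 2 := by
  conv_lhs => rw [hK.spectral_theorem, ← map_mul, Unitary.conjStarAlgAut_apply, trace_mul_cycle]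
  simp [trace_diagonal, pow_two]

open scoped ComplexOrder in
theorem eigenvalues_le_one (hK : K.IsHermitian) (hle : (1 - K).PosSemidef) (i : m) :
    hK.eigenvalues i ≤ 1 := by
  let v := hK.eigenvectorBasis i
  have hnonneg := hle.re_dotProduct_nonneg v.ofLp
  have hunit : RCLike.re (star v.ofLp ⬝ᵥ v.ofLp) = (1 : ℝ) := by
    have h := inner_self_eq_norm_sq (𝕜 := ℂ) v
    rwa [hK.eigenvectorBasis.orthonormal.1 i, EuclideanSpace.inner_eq_star_dotProduct,
      dotProduct_comm, one_pow] at h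
  rw [sub_mulVec, one_mulVec, dotProduct_sub, map_sub, ← hK.eigenvalues_eq i, hunit] at hnonneg
  exact sub_nonneg.mp hnonneg

end Spectral

section ArcCoefficients

variable {a L : ℝ}

theorem fourierCoeff_indicator_circleArc (hL : 0 ≤ L) (hL' : L ≤ 2 * π) (k : ℤ) :
    fourierCoeff ((circleArc a L).indicator 1) k =
      (1 / (2 * π) : ℝ) • ∫ x in a..a + L, Complex.exp (-(k * Complex.I) * x) := by
  have hindicator : Set.EqOn
      (fun x : ℝ => fourier (-k) (x : AddCircle (2 * π)) •
        (circleArc a L).indicator (1 : AddCircle (2 * π) → ℂ) x)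
      ((Set.Ico a (a + L)).indicator fun x : ℝ => Complex.exp (-(k * Complex.I) * x))
      (Set.Ico a (a + 2 * π)) := by
    intro x hx
    have hmem := coe_mem_circleArc (a := a) (L := L) (Set.Ico_subset_Ico_right (by linarith)) hx
    by_cases h : x ∈ Set.Ico a (a + L)
    · have hfourier : fourier (-k) (x : AddCircle (2 * π)) =
          Complex.exp (-(k * Complex.I) * x) := by
        rw [fourier_coe_apply]
        congr 1
        have := Complex.ofReal_ne_zero.mpr pi_ne_zero
        push_cast
        field_simp
      simp only [Set.indicator_of_mem (hmem.mpr h), Set.indicator_of_mem h, Pi.one_apply,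
        smul_eq_mul, mul_one, hfourier]
    · simp only [Set.indicator_of_notMem (mt hmem.mp h), Set.indicator_of_notMem h, smul_zero]
  rw [fourierCoeff_eq_intervalIntegral _ _ a, intervalIntegral.integral_of_le (by linarith),
    intervalIntegral.integral_of_le (by linarith), ← integral_Ico_eq_integral_Ioc,
    ← integral_Ico_eq_integral_Ioc, setIntegral_congr_fun measurableSet_Ico hindicator,
    setIntegral_indicator measurableSet_Ico,
    Set.inter_eq_right.mpr (Set.Ico_subset_Ico_right (by linarith))]

theorem fourierCoeff_indicator_circleArc_zero (hL : 0 ≤ L) (hL' : L ≤ 2 * π) :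
    fourierCoeff ((circleArc a L).indicator (1 : AddCircle (2 * π) → ℂ)) 0 =
      (L / (2 * π) : ℝ) := by
  rw [fourierCoeff_indicator_circleArc hL hL']
  simp [div_eq_inv_mul]

theorem exp_neg_mul_I_sub (x y : ℝ) :
    Complex.exp (-(x + y : ℝ) * Complex.I) - Complex.exp (-(x - y : ℝ) * Complex.I) =
      Complex.exp ((-x : ℝ) * Complex.I) * ((-(2 * sin y) : ℝ) * Complex.I) := by
  have hadd : -((x + y : ℝ) : ℂ) * Complex.I = (-x : ℝ) * Complex.I + (-y : ℂ) * Complex.I := by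
    push_cast
    ring
  have hsub : -((x - y : ℝ) : ℂ) * Complex.I = (-x : ℝ) * Complex.I + (y : ℂ) * Complex.I := by
    push_cast
    ring
  rw [hadd, hsub, Complex.exp_add, Complex.exp_add, Complex.exp_mul_I (y : ℂ),
    Complex.exp_mul_I (-y : ℂ), Complex.cos_neg, Complex.sin_neg]
  push_cast
  ring

theorem norm_sq_fourierCoeff_indicator_circleArc (hL : 0 ≤ L) (hL' : L ≤ 2 * π) {k : ℤ}
    (hk : k ≠ 0) :
    ‖fourierCoeff ((circleArc a L).indicator (1 : AddCircle (2 * π) → ℂ)) k‖ ^ 2 =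
      sin (k * L / 2) ^ 2 / (π ^ 2 * k ^ 2) := by
  have hkI : -((k : ℂ) * Complex.I) ≠ 0 :=
    neg_ne_zero.mpr (mul_ne_zero (Int.cast_ne_zero.mpr hk) Complex.I_ne_zero)
  have hright : -((k : ℂ) * Complex.I) * (a + L : ℝ) =
      -(k * (a + L / 2) + k * L / 2 : ℝ) * Complex.I := by
    push_cast
    ring
  have hleft : -((k : ℂ) * Complex.I) * (a : ℝ) =
      -(k * (a + L / 2) - k * L / 2 : ℝ) * Complex.I := by
    push_cast
    ring
  rw [fourierCoeff_indicator_circleArc hL hL', integral_exp_mul_complex hkI, hright, hleft,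
    exp_neg_mul_I_sub, norm_smul]
  simp only [norm_div, norm_mul, norm_neg, Complex.norm_exp_ofReal_mul_I, Complex.norm_I,
    Complex.norm_real, Complex.norm_intCast, norm_eq_abs, mul_one, one_mul, mul_pow, div_pow,
    sq_abs, abs_one]
  field_simp

theorem ofReal_indicator_one {α : Type*} (A : Set α) :
    (fun x => ((A.indicator 1 x : ℝ) : ℂ)) = A.indicator 1 := by
  ext x
  by_cases h : x ∈ A <;> simp [h]

theorem hasSum_norm_sq_fourierCoeff_indicator_circleArc (hL : 0 ≤ L) (hL' : L < 2 * π) :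
    HasSum (fun k => ‖fourierCoeff ((circleArc a L).indicator (1 : AddCircle (2 * π) → ℂ)) k‖ ^ 2)
      (L / (2 * π)) := by
  let g : Lp ℂ 2 (AddCircle.haarAddCircle (T := 2 * π)) :=
    indicatorConstLp 2 (measurableSet_circleArc (a := a) hL') (measure_ne_top _ _) 1
  have hg : g =ᵐ[AddCircle.haarAddCircle] (circleArc a L).indicator 1 := indicatorConstLp_coeFn
  have hnorm : ∫ x, ‖g x‖ ^ 2 ∂AddCircle.haarAddCircle = L / (2 * π) := by
    refine Complex.ofReal_injective ?_
    rw [← fourierCoeff_indicator_circleArc_zero (a := a) hL hL'.le, fourierCoeff,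
      ← integral_complex_ofReal]
    refine integral_congr_ae ?_
    filter_upwards [hg] with x hx
    rw [hx]
    by_cases h : x ∈ circleArc a L <;> simp [h]
  have hsum := hasSum_sq_fourierCoeff g
  simp only [fourierCoeff_congr_ae hg, hnorm] at hsum
  exact hsum

end ArcCoefficients

section ToeplitzSpectrum

variable {N : ℕ}

theorem trace_fourierToeplitz (f : AddCircle (2 * π) → ℂ) :
    (fourierToeplitz N f).trace = N * fourierCoeff f 0 := by
  simp [trace, fourierToeplitz]

theorem trace_fourierToeplitz_mul_self (f : AddCircle (2 * π) → ℝ) :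
    (fourierToeplitz N (fun x => (f x : ℂ)) * fourierToeplitz N fun x => (f x : ℂ)).trace =
      ∑ r : Fin N, ∑ j : Fin N, (‖fourierCoeff (fun x => (f x : ℂ)) ((r : ℤ) - j)‖ ^ 2 : ℝ) := by
  push_cast
  simp only [trace, diag, Matrix.mul_apply]
  refine Finset.sum_congr rfl fun r _ => Finset.sum_congr rfl fun j _ => ?_
  rw [← Complex.mul_conj', ← RCLike.star_def, ← fourierCoeff_ofReal_neg, neg_sub]
  rfl

theorem exists_prod_eq_det_one_add_smul_fourierToeplitz {f : AddCircle (2 * π) → ℝ}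
    (hf : Integrable f AddCircle.haarAddCircle) (hpos : ∀ x, 0 ≤ f x) (hle : ∀ x, f x ≤ 1) :
    ∃ w : Fin N → ℝ, (∀ i, w i ∈ Set.Icc 0 1) ∧
      (∀ s : ℂ, (1 + s • fourierToeplitz N fun x => (f x : ℂ)).det = ∏ i, (1 + s * w i)) ∧
      ∑ i, (w i : ℂ) = N * fourierCoeff (fun x => (f x : ℂ)) 0 ∧
      ∑ i, w i ^ 2 =
        ∑ r : Fin N, ∑ j : Fin N, ‖fourierCoeff (fun x => (f x : ℂ)) ((r : ℤ) - j)‖ ^ 2 := by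
  have hpsd := posSemidef_fourierToeplitz (N := N) hf hpos
  refine ⟨hpsd.1.eigenvalues, fun i => ⟨hpsd.eigenvalues_nonneg i,
    eigenvalues_le_one hpsd.1 (posSemidef_one_sub_fourierToeplitz hf hle) i⟩,
    det_one_add_smul_eq_prod_eigenvalues hpsd.1, ?_, ?_⟩
  · rw [← trace_fourierToeplitz, hpsd.1.trace_eq_sum_eigenvalues]
    rfl
  · have htrace := trace_mul_self_eq_sum_eigenvalues_sq hpsd.1
    rw [trace_fourierToeplitz_mul_self] at htrace
    exact_mod_cast htrace.symm

theorem integral_one_add_pow_countAngles (ℙ : Measure (unitaryGroup (Fin N) ℂ))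
    [IsProbabilityMeasure ℙ] [ℙ.IsMulLeftInvariant] (hN : 0 < N) {a L : ℝ} (ha : 0 ≤ a)
    (haL : a + L ≤ 2 * π) (hL : 0 ≤ L) (hL' : L < 2 * π) (s : ℂ) :
    ∫ U, (1 + s) ^ countAngles N U (Set.Ico a (a + L)) ∂ℙ =
      (1 + s • fourierToeplitz N ((circleArc a L).indicator 1)).det := by
  have hint : Integrable ((circleArc a L).indicator (1 : AddCircle (2 * π) → ℂ))
      AddCircle.haarAddCircle := (integrable_const 1).indicator (measurableSet_circleArc hL')
  rw [← fourierToeplitz_one_add_mul hint,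
    ← (heineSzego_circleArc (ℙ := ℙ) hN hL hL' s).integral_eigenProd]
  simp only [eigenProd_circleArc ha haL]

end ToeplitzSpectrum

section EvenSums

variable {e : ℤ → ℝ}

theorem sum_range_sub_of_even (he : ∀ k, e (-k) = e k) (r m : ℕ) :
    ∑ j ∈ Finset.range (r + 1 + m), e (r - j) =
      e 0 + ∑ k ∈ Finset.range r, e (k + 1) + ∑ k ∈ Finset.range m, e (k + 1) := by
  have hleft : ∑ j ∈ Finset.range r, e (r - j) = ∑ k ∈ Finset.range r, e (k + 1) := by
    rw [← Finset.sum_range_reflect]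
    refine Finset.sum_congr rfl fun j hj => congrArg e ?_
    have := Finset.mem_range.mp hj
    omega
  have hright : ∑ k ∈ Finset.range m, e (r - (r + 1 + k : ℕ)) =
      ∑ k ∈ Finset.range m, e (k + 1) := by
    refine Finset.sum_congr rfl fun k _ => ?_
    rw [← he]
    congr 1
    push_cast
    ring
  rw [Finset.sum_range_add, Finset.sum_range_succ, hleft, hright, sub_self]
  ring

theorem hasSum_nat_add_one_of_even (he : ∀ k, e (-k) = e k) {x : ℝ} (hx : HasSum e x) :
    HasSum (fun k : ℕ => e (k + 1)) ((x - e 0) / 2) := by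
  have hnat : HasSum (fun k : ℕ => e k) ((x + e 0) / 2) := by
    have h := hx.nat_add_neg.div_const 2
    simpa only [he, add_self_div_two] using h
  have hshift : HasSum (fun k : ℕ => e (k + 1)) ((x + e 0) / 2 - e 0) := by
    simpa using (hasSum_nat_add_iff' 1).mpr hnat
  convert hshift using 1
  ring

theorem mul_sub_sum_sum_of_even (he : ∀ k, e (-k) = e k) (N : ℕ) (F : ℝ) :
    N * (e 0 + 2 * F) - ∑ r : Fin N, ∑ j : Fin N, e ((r : ℤ) - j) =
      2 * ∑ r ∈ Finset.range N, (F - ∑ k ∈ Finset.range r, e (k + 1)) := by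
  have hrow : ∀ r ∈ Finset.range N, ∑ j : Fin N, e ((r : ℤ) - j) =
      e 0 + ∑ k ∈ Finset.range r, e (k + 1) + ∑ k ∈ Finset.range (N - 1 - r), e (k + 1) := by
    intro r hr
    have := Finset.mem_range.mp hr
    rw [← Finset.sum_range fun j => e ((r : ℤ) - j), ← sum_range_sub_of_even he]
    congr 2
    omega
  rw [← Finset.sum_range fun r => ∑ j : Fin N, e ((r : ℤ) - j), Finset.sum_congr rfl hrow,
    Finset.sum_add_distrib, Finset.sum_range_reflect fun r => ∑ k ∈ Finset.range r, e (k + 1),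
    Finset.sum_add_distrib, Finset.sum_sub_distrib]
  simp only [Finset.sum_const, Finset.card_range, nsmul_eq_mul]
  ring

end EvenSums

section Tails

variable {e : ℕ → ℝ} {C F : ℝ}

theorem sub_sum_range_le_div (hF : HasSum e F) (hC : 0 ≤ C)
    (hle : ∀ k, e k ≤ C / ((k : ℝ) + 1) ^ 2) {m : ℕ} (hm : m ≠ 0) :
    F - ∑ k ∈ Finset.range m, e k ≤ C / m := by
  refine le_of_tendsto (hF.tendsto_sum_nat.sub_const _) ?_
  filter_upwards [eventually_ge_atTop m] with n hn
  rw [← Finset.sum_Ico_eq_sub e hn]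
  calc ∑ k ∈ Finset.Ico m n, e k
      ≤ ∑ k ∈ Finset.Ico m n, C * (((k + 1 : ℕ) : ℝ) ^ 2)⁻¹ :=
        Finset.sum_le_sum fun k _ => by simpa [div_eq_mul_inv] using hle k
    _ = C * ∑ i ∈ Finset.Ioc m n, ((i : ℝ) ^ 2)⁻¹ := by
        rw [← Finset.mul_sum, Finset.sum_Ico_add' fun i : ℕ => ((i : ℝ) ^ 2)⁻¹,
          Finset.Ico_add_one_add_one_eq_Ioc]
    _ ≤ C * (m : ℝ)⁻¹ := by
        refine mul_le_mul_of_nonneg_left ((sum_Ioc_inv_sq_le_sub hm hn).trans ?_) hC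
        exact sub_le_self _ (by positivity)
    _ = C / m := (div_eq_mul_inv _ _).symm

theorem sum_range_inv_add_le {x : ℝ} (hx : 0 < x) (n : ℕ) :
    ∑ k ∈ Finset.range n, (x + k)⁻¹ ≤ x⁻¹ + log ((x + n) / x) := by
  have hanti : AntitoneOn (fun y : ℝ => y⁻¹) (Set.Icc x (x + n)) :=
    fun y hy z _ hyz => inv_anti₀ (hx.trans_le hy.1) hyz
  have hintegral := hanti.sum_le_integral
  rw [integral_inv_of_pos hx (by positivity)] at hintegral
  calc ∑ k ∈ Finset.range n, (x + k)⁻¹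
      ≤ ∑ k ∈ Finset.range (n + 1), (x + k)⁻¹ :=
        Finset.sum_le_sum_of_subset_of_nonneg (Finset.range_subset_range.mpr n.le_succ)
          fun k _ _ => by positivity
    _ = x⁻¹ + ∑ k ∈ Finset.range n, (x + (k + 1 : ℕ))⁻¹ := by
        rw [Finset.sum_range_succ', Nat.cast_zero, add_zero, add_comm]
    _ ≤ x⁻¹ + log ((x + n) / x) := by gcongr

theorem sq_mul_le_sum_tails (hF : HasSum e F) (hnonneg : ∀ k, 0 ≤ e k) {q N : ℕ} (hqN : q ≤ N)
    {c : ℝ} (hc : ∀ k < q, c ≤ e (q + k)) :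
    (q : ℝ) ^ 2 * c ≤ ∑ r ∈ Finset.range N, (F - ∑ k ∈ Finset.range r, e k) := by
  have hpartial (n : ℕ) : ∑ k ∈ Finset.range n, e k ≤ F :=
    sum_le_hasSum _ (fun k _ => hnonneg k) hF
  have hblock : q * c ≤ ∑ k ∈ Finset.range q, e (q + k) := by
    simpa using Finset.card_nsmul_le_sum (Finset.range q) (fun k => e (q + k)) c
      fun k hk => hc k (Finset.mem_range.mp hk)
  have htail : ∀ r ∈ Finset.range q, q * c ≤ F - ∑ k ∈ Finset.range r, e k := by
    intro r hr
    have hmono : ∑ k ∈ Finset.range r, e k ≤ ∑ k ∈ Finset.range q, e k :=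
      Finset.sum_le_sum_of_subset_of_nonneg
        (Finset.range_subset_range.mpr (Finset.mem_range.mp hr).le) fun k _ _ => hnonneg k
    have hsplit := hpartial (q + q)
    rw [Finset.sum_range_add] at hsplit
    linarith
  calc (q : ℝ) ^ 2 * c = ∑ _r ∈ Finset.range q, q * c := by
        rw [Finset.sum_const, Finset.card_range, nsmul_eq_mul]
        ring
    _ ≤ ∑ r ∈ Finset.range q, (F - ∑ k ∈ Finset.range r, e k) := Finset.sum_le_sum htail
    _ ≤ ∑ r ∈ Finset.range N, (F - ∑ k ∈ Finset.range r, e k) :=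
        Finset.sum_le_sum_of_subset_of_nonneg (Finset.range_subset_range.mpr hqN)
          fun r _ _ => sub_nonneg.mpr (hpartial r)

theorem sum_tails_le (hF : HasSum e F) (hnonneg : ∀ k, 0 ≤ e k) (hC : 0 ≤ C)
    (hle : ∀ k, e k ≤ C / ((k : ℝ) + 1) ^ 2) {M N : ℕ} (hM : M ≠ 0) (hMN : M ≤ N) :
    ∑ r ∈ Finset.range N, (F - ∑ k ∈ Finset.range r, e k) ≤
      M * F + C * ((M : ℝ)⁻¹ + log (N / M)) := by
  obtain ⟨n, rfl⟩ := Nat.exists_eq_add_of_le hMN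
  have hMpos : (0 : ℝ) < M := by positivity
  have hhead : ∑ r ∈ Finset.range M, (F - ∑ k ∈ Finset.range r, e k) ≤ M * F := by
    simpa using Finset.sum_le_card_nsmul (Finset.range M)
      (fun r => F - ∑ k ∈ Finset.range r, e k) F
      fun r _ => sub_le_self _ (Finset.sum_nonneg fun k _ => hnonneg k)
  have htail (r : ℕ) : F - ∑ k ∈ Finset.range (M + r), e k ≤ C * ((M : ℝ) + r)⁻¹ := by
    have h := sub_sum_range_le_div hF hC hle (m := M + r) (by omega)
    rwa [div_eq_mul_inv, Nat.cast_add] at h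
  rw [Finset.sum_range_add]
  refine add_le_add hhead ((Finset.sum_le_sum fun r _ => htail r).trans ?_)
  rw [← Finset.mul_sum, Nat.cast_add]
  exact mul_le_mul_of_nonneg_left (sum_range_inv_add_le hMpos n) hC

end Tails

section ArcVariance

variable {N : ℕ} {a L : ℝ}

/-- The number variance of the arc of length `L` starting at `a`, written as `tr T - tr T²` for the
Toeplitz matrix `T` of its indicator. -/
noncomputable def arcVariance (N : ℕ) (a L : ℝ) : ℝ :=
  N * (L / (2 * π)) - ∑ r : Fin N, ∑ j : Fin N,
    ‖fourierCoeff ((circleArc a L).indicator (1 : AddCircle (2 * π) → ℂ)) ((r : ℤ) - j)‖ ^ 2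

/-- The squared modulus of the Fourier coefficient of index `k + 1` of an arc of length `L`. -/
noncomputable def arcEnergy (L : ℝ) (k : ℕ) : ℝ :=
  sin ((k + 1) * L / 2) ^ 2 / (π ^ 2 * ((k : ℝ) + 1) ^ 2)

theorem arcEnergy_nonneg (k : ℕ) : 0 ≤ arcEnergy L k := by
  unfold arcEnergy
  positivity

theorem arcEnergy_le (k : ℕ) : arcEnergy L k ≤ (π ^ 2)⁻¹ / ((k : ℝ) + 1) ^ 2 := by
  rw [arcEnergy, inv_eq_one_div, div_div]
  gcongr
  exact sin_sq_le_one _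

theorem le_arcEnergy (hL : 0 ≤ L) {k : ℕ} (hk : (k + 1) * L ≤ π) :
    L ^ 2 / (16 * π ^ 2) ≤ arcEnergy L k := by
  have hsin : ((k : ℝ) + 1) * L / 4 ≤ sin ((k + 1) * L / 2) := by
    have hjordan := mul_le_sin (x := (k + 1) * L / 2) (by positivity) (by linarith)
    refine le_trans ?_ hjordan
    rw [div_mul_eq_mul_div, le_div_iff₀ pi_pos]
    nlinarith [pi_le_four, mul_nonneg (Nat.cast_add_one_pos (α := ℝ) k).le hL]
  calc L ^ 2 / (16 * π ^ 2)
      = (((k : ℝ) + 1) * L / 4) ^ 2 / (π ^ 2 * ((k : ℝ) + 1) ^ 2) := by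
        field_simp
        norm_num
    _ ≤ arcEnergy L k := by
        unfold arcEnergy
        gcongr

theorem exists_arcVariance_eq_sum_tails (hL : 0 ≤ L) (hL' : L < 2 * π) :
    ∃ F ≤ L / (4 * π), HasSum (arcEnergy L) F ∧ arcVariance N a L =
      2 * ∑ r ∈ Finset.range N, (F - ∑ k ∈ Finset.range r, arcEnergy L k) := by
  set e : ℤ → ℝ := fun k =>
    ‖fourierCoeff ((circleArc a L).indicator (1 : AddCircle (2 * π) → ℂ)) k‖ ^ 2 with he
  have heven (k : ℤ) : e (-k) = e k := by
    simp only [he, ← ofReal_indicator_one]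
    rw [fourierCoeff_ofReal_neg, norm_star]
  have henergy (k : ℕ) : e (k + 1) = arcEnergy L k := by
    rw [he, arcEnergy]
    simp only
    rw [norm_sq_fourierCoeff_indicator_circleArc hL hL'.le (by omega)]
    push_cast
    rfl
  have hsum := hasSum_nat_add_one_of_even heven
    (hasSum_norm_sq_fourierCoeff_indicator_circleArc (a := a) hL hL')
  have hvar := mul_sub_sum_sum_of_even heven N ((L / (2 * π) - e 0) / 2)
  rw [mul_div_cancel₀ _ two_ne_zero, add_sub_cancel] at hvar
  simp only [henergy] at hsum hvar
  refine ⟨_, ?_, hsum, hvar⟩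
  have hzero : 0 ≤ e 0 := sq_nonneg _
  have hhalf : L / (4 * π) = L / (2 * π) / 2 := by
    field_simp
    norm_num
  linarith

theorem le_arcVariance (hL : 0 ≤ L) (hL' : L < 2 * π) {q : ℕ} (hqN : q ≤ N) (hqL : q * L ≤ 1) :
    (q * L) ^ 2 / (8 * π ^ 2) ≤ arcVariance N a L := by
  obtain ⟨F, -, hF, hvar⟩ := exists_arcVariance_eq_sum_tails (N := N) (a := a) hL hL'
  have hblock : ∀ k < q, L ^ 2 / (16 * π ^ 2) ≤ arcEnergy L (q + k) := by
    intro k hk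
    have hk' : (k : ℝ) + 1 ≤ q := by exact_mod_cast hk
    refine le_arcEnergy hL ?_
    push_cast
    nlinarith [pi_gt_three]
  have h := sq_mul_le_sum_tails hF arcEnergy_nonneg hqN hblock
  calc (q * L) ^ 2 / (8 * π ^ 2) = 2 * ((q : ℝ) ^ 2 * (L ^ 2 / (16 * π ^ 2))) := by
        field_simp
        ring
    _ ≤ arcVariance N a L := by
        rw [hvar]
        gcongr

theorem arcVariance_le (hL : 0 ≤ L) (hL' : L < 2 * π) {M : ℕ} (hM : M ≠ 0) (hMN : M ≤ N) :
    arcVariance N a L ≤ M * L / (2 * π) + 2 / π ^ 2 * ((M : ℝ)⁻¹ + log (N / M)) := by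
  obtain ⟨F, hFle, hF, hvar⟩ := exists_arcVariance_eq_sum_tails (N := N) (a := a) hL hL'
  have h := sum_tails_le hF arcEnergy_nonneg (by positivity) arcEnergy_le hM hMN
  calc arcVariance N a L
      ≤ 2 * (M * (L / (4 * π)) + (π ^ 2)⁻¹ * ((M : ℝ)⁻¹ + log (N / M))) := by
        rw [hvar]
        have := mul_le_mul_of_nonneg_left hFle (Nat.cast_nonneg (α := ℝ) M)
        linarith
    _ = M * L / (2 * π) + 2 / π ^ 2 * ((M : ℝ)⁻¹ + log (N / M)) := by
        field_simp
        ring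

theorem le_arcVariance_inv_sqrt (hN : 1 ≤ N) :
    1 / (32 * π ^ 2) ≤ arcVariance N a (√N)⁻¹ := by
  have hsqrt : 1 ≤ √(N : ℝ) := one_le_sqrt.mpr (by exact_mod_cast hN)
  have hfloor : (⌊√(N : ℝ)⌋₊ : ℝ) ≤ √N := Nat.floor_le (by positivity)
  have hhalf : √(N : ℝ) / 2 ≤ ⌊√(N : ℝ)⌋₊ := by
    have hlt := Nat.lt_floor_add_one √(N : ℝ)
    have hone : (1 : ℝ) ≤ ⌊√(N : ℝ)⌋₊ := by exact_mod_cast Nat.le_floor (by simpa using hsqrt)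
    linarith
  have hfloorN : ⌊√(N : ℝ)⌋₊ ≤ N :=
    Nat.floor_le_of_le (sqrt_le_self_iff.mpr (.inr (by exact_mod_cast hN)))
  have hupper : (⌊√(N : ℝ)⌋₊ : ℝ) * (√N)⁻¹ ≤ 1 := by
    rwa [← div_eq_mul_inv, div_le_one (by positivity)]
  have hlower : 1 / 2 ≤ (⌊√(N : ℝ)⌋₊ : ℝ) * (√N)⁻¹ := by
    rw [← div_eq_mul_inv, le_div_iff₀ (by positivity)]
    linarith
  have hL' : (√(N : ℝ))⁻¹ < 2 * π := by linarith [inv_le_one_of_one_le₀ hsqrt, pi_gt_three]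
  calc 1 / (32 * π ^ 2) = (1 / 2) ^ 2 / (8 * π ^ 2) := by
        field_simp
        norm_num
    _ ≤ ((⌊√(N : ℝ)⌋₊ : ℝ) * (√N)⁻¹) ^ 2 / (8 * π ^ 2) := by gcongr
    _ ≤ arcVariance N a (√N)⁻¹ := le_arcVariance (by positivity) hL' hfloorN hupper

theorem arcVariance_inv_sqrt_le (hN : 2 ≤ N) :
    arcVariance N a (√N)⁻¹ ≤ 2 + log N / π ^ 2 := by
  have hsqrt : 1 ≤ √(N : ℝ) := one_le_sqrt.mpr (by exact_mod_cast one_le_two.trans hN)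
  have hceil : √(N : ℝ) ≤ ⌈√(N : ℝ)⌉₊ := Nat.le_ceil _
  have hceilpos : 0 < ⌈√(N : ℝ)⌉₊ := Nat.ceil_pos.mpr (by positivity)
  have hceilN : ⌈√(N : ℝ)⌉₊ ≤ N :=
    Nat.ceil_le.mpr (sqrt_le_self_iff.mpr (.inr (by exact_mod_cast one_le_two.trans hN)))
  have hL : (√(N : ℝ))⁻¹ ≤ 1 := inv_le_one_of_one_le₀ hsqrt
  have hprod : (⌈√(N : ℝ)⌉₊ : ℝ) * (√N)⁻¹ ≤ 2 := by
    rw [← div_eq_mul_inv, div_le_iff₀ (by positivity)]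
    linarith [Nat.ceil_lt_add_one (sqrt_nonneg (N : ℝ))]
  have hlog : log ((N : ℝ) / ⌈√(N : ℝ)⌉₊) ≤ log N / 2 := by
    rw [← log_sqrt (Nat.cast_nonneg N)]
    refine log_le_log (by positivity) ?_
    rw [div_le_iff₀ (by positivity)]
    nlinarith [mul_self_sqrt (Nat.cast_nonneg (α := ℝ) N)]
  have hinv : ((⌈√(N : ℝ)⌉₊ : ℝ))⁻¹ ≤ 1 := inv_le_one_of_one_le₀ (by exact_mod_cast hceilpos)
  have hL' : (√(N : ℝ))⁻¹ < 2 * π := by linarith [pi_gt_three]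
  have hpi : 2 / π ^ 2 ≤ 1 := by
    rw [div_le_one (by positivity)]
    nlinarith [pi_gt_three]
  have hhead : (⌈√(N : ℝ)⌉₊ : ℝ) * (√N)⁻¹ / (2 * π) ≤ 1 := by
    rw [div_le_one (by positivity)]
    linarith [pi_gt_three]
  calc arcVariance N a (√N)⁻¹
      ≤ 1 + 2 / π ^ 2 * (1 + log N / 2) := by
        refine (arcVariance_le (by positivity) hL' hceilpos.ne' hceilN).trans ?_
        gcongr
    _ = 1 + 2 / π ^ 2 + log N / π ^ 2 := by
        field_simp
        ring
    _ ≤ 2 + log N / π ^ 2 := by linarith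

end ArcVariance

section PaleyZygmund

variable {Ω : Type*} [MeasurableSpace Ω] {P : Measure Ω} [IsProbabilityMeasure P]

theorem sq_integral_sub_div_le_measureReal {Y : Ω → ℝ} (hY : Measurable Y) (hY2 : MemLp Y 2 P)
    {T : ℝ} (hT : 0 ≤ T) (hTY : T ≤ ∫ ω, Y ω ∂P) :
    (∫ ω, Y ω ∂P - T) ^ 2 / ∫ ω, Y ω ^ 2 ∂P ≤ P.real {ω | T < Y ω} := by
  set A := ∫ ω, Y ω ∂P
  set B := ∫ ω, Y ω ^ 2 ∂P
  set lam := (A - T) / B with hlam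
  have hlam_nonneg : 0 ≤ lam :=
    div_nonneg (sub_nonneg.mpr hTY) (integral_nonneg fun ω => sq_nonneg _)
  have hmeas : MeasurableSet {ω | T < Y ω} := measurableSet_lt measurable_const hY
  have hpoint (ω : Ω) :
      2 * lam * (Y ω - T) - lam ^ 2 * Y ω ^ 2 ≤ {ω | T < Y ω}.indicator (fun _ => (1 : ℝ)) ω := by
    by_cases h : ω ∈ {ω | T < Y ω}
    · rw [Set.indicator_of_mem h]
      nlinarith [sq_nonneg (lam * Y ω - 1), mul_nonneg hlam_nonneg hT]
    · rw [Set.indicator_of_notMem h]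
      have hle : Y ω - T ≤ 0 := sub_nonpos.mpr (not_lt.mp h)
      nlinarith [sq_nonneg (lam * Y ω), mul_nonpos_of_nonneg_of_nonpos hlam_nonneg hle]
  have hint : Integrable Y P := hY2.integrable one_le_two
  have hlinear : Integrable (fun ω => 2 * lam * (Y ω - T)) P :=
    (hint.sub (integrable_const T)).const_mul _
  have hquadratic : Integrable (fun ω => lam ^ 2 * Y ω ^ 2) P := hY2.integrable_sq.const_mul _
  calc (A - T) ^ 2 / B = 2 * lam * (A - T) - lam ^ 2 * B := by
        rw [hlam]
        by_cases hB0 : B = 0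
        · simp [hB0]
        · field_simp
          ring
    _ = ∫ ω, (2 * lam * (Y ω - T) - lam ^ 2 * Y ω ^ 2) ∂P := by
        rw [integral_sub hlinear hquadratic, integral_const_mul, integral_const_mul,
          integral_sub hint (integrable_const T), integral_const, probReal_univ, one_smul]
    _ ≤ ∫ ω, {ω | T < Y ω}.indicator (fun _ => (1 : ℝ)) ω ∂P :=
        integral_mono (hlinear.sub hquadratic) ((integrable_const 1).indicator hmeas) hpoint
    _ = P.real {ω | T < Y ω} := by
        rw [integral_indicator_const _ hmeas, smul_eq_mul, mul_one]

end PaleyZygmund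

section ExponentialBounds

variable {p u : ℝ}

theorem one_add_exp_sub_one_mul_pos (hp : p ∈ Set.Icc 0 1) : 0 < 1 + (exp u - 1) * p := by
  have hexp := exp_pos u
  rcases hp.2.lt_or_eq with h | rfl
  · nlinarith [hp.1]
  · linarith

theorem hasDerivAt_log_one_add_exp_sub_one_mul (hp : p ∈ Set.Icc 0 1) :
    HasDerivAt (fun u => log (1 + (exp u - 1) * p)) (exp u * p / (1 + (exp u - 1) * p)) u :=
  ((((hasDerivAt_exp u).sub_const 1).mul_const p).const_add 1).log
    (one_add_exp_sub_one_mul_pos hp).ne'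

theorem nonneg_of_hasDerivAt_nonneg {h h' : ℝ → ℝ} (hzero : h 0 = 0)
    (hderiv : ∀ x, HasDerivAt h (h' x) x) (hnonneg : ∀ x, 0 ≤ x → 0 ≤ h' x) (hu : 0 ≤ u) :
    0 ≤ h u := by
  have hmono : MonotoneOn h (Set.Ici 0) := by
    refine monotoneOn_of_deriv_nonneg (convex_Ici 0)
      (fun x _ => (hderiv x).continuousAt.continuousWithinAt)
      (fun x _ => (hderiv x).differentiableAt.differentiableWithinAt) fun x hx => ?_
    rw [interior_Ici] at hx
    rw [(hderiv x).deriv]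
    exact hnonneg x hx.le
  rw [← hzero]
  exact hmono Set.self_mem_Ici hu hu

theorem one_add_exp_sub_one_mul_le_exp (hp : p ∈ Set.Icc 0 1) (hu : 0 ≤ u) :
    1 + (exp u - 1) * p ≤ exp (u * p + (exp u - 1 - u) * (p - p ^ 2)) := by
  rw [← log_le_iff_le_exp (one_add_exp_sub_one_mul_pos hp), ← sub_nonneg]
  refine nonneg_of_hasDerivAt_nonneg
    (h := fun x => x * p + (exp x - 1 - x) * (p - p ^ 2) - log (1 + (exp x - 1) * p))
    (h' := fun x => 1 * p + (exp x - 1) * (p - p ^ 2) - exp x * p / (1 + (exp x - 1) * p))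
    (by simp) (fun x => ?_) (fun x hx => ?_) hu
  · exact (((hasDerivAt_id x).mul_const p).add
      ((((hasDerivAt_exp x).sub_const 1).sub (hasDerivAt_id x)).mul_const _)).sub
      (hasDerivAt_log_one_add_exp_sub_one_mul hp)
  · have hexp : 0 ≤ exp x - 1 := sub_nonneg.mpr (one_le_exp hx)
    rw [sub_nonneg, div_le_iff₀ (one_add_exp_sub_one_mul_pos hp)]
    have hgap : 0 ≤ (exp x - 1) * (p * (1 - p)) * ((exp x - 1) * p) :=
      mul_nonneg (mul_nonneg hexp (mul_nonneg hp.1 (sub_nonneg.mpr hp.2))) (mul_nonneg hexp hp.1)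
    linear_combination hgap

theorem exp_le_one_add_exp_sub_one_mul (hp : p ∈ Set.Icc 0 1) (hu : 0 ≤ u) :
    exp (u * p + (exp (-u) - 1 + u) * (p - p ^ 2)) ≤ 1 + (exp u - 1) * p := by
  rw [← le_log_iff_exp_le (one_add_exp_sub_one_mul_pos hp), ← sub_nonneg]
  refine nonneg_of_hasDerivAt_nonneg
    (h := fun x => log (1 + (exp x - 1) * p) - (x * p + (exp (-x) - 1 + x) * (p - p ^ 2)))
    (h' := fun x => exp x * p / (1 + (exp x - 1) * p) -
      (1 * p + (exp (-x) * (-1) + 1) * (p - p ^ 2)))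
    (by simp) (fun x => ?_) (fun x hx => ?_) hu
  · exact (hasDerivAt_log_one_add_exp_sub_one_mul hp).sub (((hasDerivAt_id x).mul_const p).add
      ((((hasDerivAt_neg x).exp.sub_const 1).add (hasDerivAt_id x)).mul_const _))
  · have hinv : exp (-x) * exp x = 1 := by rw [← exp_add, neg_add_cancel, exp_zero]
    have hexp : 0 ≤ exp x - 1 := sub_nonneg.mpr (one_le_exp hx)
    have hexp_neg : 0 ≤ 1 - exp (-x) := sub_nonneg.mpr (exp_le_one_iff.mpr (neg_nonpos.mpr hx))
    have hp' : 0 ≤ 1 - p := sub_nonneg.mpr hp.2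
    rw [sub_nonneg, le_div_iff₀ (one_add_exp_sub_one_mul_pos hp)]
    have hgap : 0 ≤ (1 - exp (-x)) * (p * (1 - p)) * ((exp x - 1) * (1 - p)) :=
      mul_nonneg (mul_nonneg hexp_neg (mul_nonneg hp.1 hp')) (mul_nonneg hexp hp')
    linear_combination hgap - p * (1 - p) * hinv

end ExponentialBounds

section Coefficients

variable {ι : Type*} {w : ι → ℝ}

theorem prod_one_add_C_mul_X_coeff_zero (s : Finset ι) :
    (∏ i ∈ s, (1 + C (w i) * X : ℝ[X])).coeff 0 = 1 := by
  simp [coeff_zero_prod]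

theorem prod_one_add_C_mul_X_coeff_one (s : Finset ι) :
    (∏ i ∈ s, (1 + C (w i) * X : ℝ[X])).coeff 1 = ∑ i ∈ s, w i := by
  classical
  induction s using Finset.induction_on with
  | empty => simp [coeff_one]
  | insert i s hi ih =>
    rw [Finset.prod_insert hi, Finset.sum_insert hi, add_mul, one_mul, mul_assoc, coeff_add,
      coeff_C_mul, coeff_X_mul _ 0, ih, prod_one_add_C_mul_X_coeff_zero, mul_one, add_comm]

theorem two_mul_prod_one_add_C_mul_X_coeff_two (s : Finset ι) :
    2 * (∏ i ∈ s, (1 + C (w i) * X : ℝ[X])).coeff 2 = (∑ i ∈ s, w i) ^ 2 - ∑ i ∈ s, w i ^ 2 := by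
  classical
  induction s using Finset.induction_on with
  | empty => simp [coeff_one]
  | insert i s hi ih =>
    rw [Finset.prod_insert hi, Finset.sum_insert hi, Finset.sum_insert hi, add_mul, one_mul,
      mul_assoc, coeff_add, coeff_C_mul, coeff_X_mul _ 1, prod_one_add_C_mul_X_coeff_one, mul_add,
      ih]
    ring

end Coefficients

section BernoulliSums

variable {Ω ι : Type*} [MeasurableSpace Ω] [Fintype ι] {P : Measure Ω} {c : Ω → ℕ} {w : ι → ℝ}

/-- The count `c` is distributed as a sum of independent Bernoulli variables with parameters `w`,
expressed through its generating function. -/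
structure IsBernoulliSum (P : Measure Ω) (c : Ω → ℕ) (w : ι → ℝ) : Prop where
  measurable : Measurable c
  le_card : ∀ ω, c ω ≤ Fintype.card ι
  mem_Icc : ∀ i, w i ∈ Set.Icc 0 1
  integral_one_add_pow : ∀ s : ℝ, ∫ ω, (1 + s) ^ c ω ∂P = ∏ i, (1 + s * w i)

theorem prod_exp_mul_add (w : ι → ℝ) (u k : ℝ) :
    ∏ i, exp (u * w i + k * (w i - w i ^ 2)) =
      exp (u * ∑ i, w i) * exp (k * (∑ i, w i - ∑ i, w i ^ 2)) := by
  rw [← exp_sum, ← exp_add, Finset.sum_add_distrib, ← Finset.mul_sum, ← Finset.mul_sum,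
    Finset.sum_sub_distrib]

namespace IsBernoulliSum

theorem memLp_comp [IsFiniteMeasure P] (h : IsBernoulliSum P c w) (f : ℕ → ℝ) (r : ENNReal) :
    MemLp (fun ω => f (c ω)) r P := by
  refine .of_bound (measurable_from_nat.comp h.measurable).aestronglyMeasurable
    (∑ k ∈ Finset.range (Fintype.card ι + 1), |f k|) (.of_forall fun ω => ?_)
  exact Finset.single_le_sum (f := fun k => |f k|) (fun _ _ => abs_nonneg _)
    (Finset.mem_range.mpr (Nat.lt_succ_of_le (h.le_card ω)))

theorem integrable_comp [IsFiniteMeasure P] (h : IsBernoulliSum P c w) (f : ℕ → ℝ) :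
    Integrable (fun ω => f (c ω)) P :=
  memLp_one_iff_integrable.mp (h.memLp_comp f 1)

theorem sum_integral_choose_mul_pow [IsFiniteMeasure P] (h : IsBernoulliSum P c w) (s : ℝ) :
    ∑ k ∈ Finset.range (Fintype.card ι + 1), (∫ ω, ((c ω).choose k : ℝ) ∂P) * s ^ k =
      ∏ i, (1 + s * w i) := by
  have hbinomial (ω : Ω) : (1 + s) ^ c ω =
      ∑ k ∈ Finset.range (Fintype.card ι + 1), ((c ω).choose k : ℝ) * s ^ k := by
    rw [add_comm, add_pow]
    refine Finset.sum_subset_zero_on_sdiff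
      (Finset.range_subset_range.mpr (Nat.succ_le_succ (h.le_card ω))) (fun k hk => ?_)
      fun k _ => by ring
    have hk' : c ω < k := by
      simp only [Finset.mem_sdiff, Finset.mem_range] at hk
      omega
    rw [Nat.choose_eq_zero_of_lt hk', Nat.cast_zero, zero_mul]
  rw [← h.integral_one_add_pow]
  simp only [hbinomial]
  rw [integral_finsetSum _ fun k _ => (h.integrable_comp fun n => (n.choose k : ℝ)).mul_const _]
  simp only [integral_mul_const]

theorem integral_choose [IsFiniteMeasure P] (h : IsBernoulliSum P c w) (k : ℕ) :
    ∫ ω, ((c ω).choose k : ℝ) ∂P = (∏ i, (1 + C (w i) * X : ℝ[X])).coeff k := by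
  have hpoly : ∏ i, (1 + C (w i) * X : ℝ[X]) =
      ∑ k ∈ Finset.range (Fintype.card ι + 1), C (∫ ω, ((c ω).choose k : ℝ) ∂P) * X ^ k := by
    refine Polynomial.funext fun s => ?_
    rw [eval_finsetSum, eval_prod]
    simp only [eval_mul, eval_C, eval_pow, eval_X, eval_add, eval_one]
    rw [h.sum_integral_choose_mul_pow]
    exact Finset.prod_congr rfl fun i _ => by rw [mul_comm]
  rw [hpoly, finsetSum_coeff]
  simp only [coeff_C_mul, coeff_X_pow, mul_ite, mul_one, mul_zero, Finset.sum_ite_eq,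
    Finset.mem_range]
  split_ifs with hk
  · rfl
  · have hzero (ω : Ω) : (c ω).choose k = 0 :=
      Nat.choose_eq_zero_of_lt ((h.le_card ω).trans_lt (by omega))
    simp [hzero]

theorem integral_eq [IsFiniteMeasure P] (h : IsBernoulliSum P c w) :
    ∫ ω, (c ω : ℝ) ∂P = ∑ i, w i := by
  simpa [prod_one_add_C_mul_X_coeff_one] using h.integral_choose 1

theorem variance_eq [IsProbabilityMeasure P] (h : IsBernoulliSum P c w) :
    ProbabilityTheory.variance (fun ω => (c ω : ℝ)) P = ∑ i, w i - ∑ i, w i ^ 2 := by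
  have hsq (n : ℕ) : (n : ℝ) ^ 2 = 2 * (n.choose 2 : ℝ) + n := by
    rw [Nat.cast_choose_two]
    ring
  rw [ProbabilityTheory.variance_eq_sub (h.memLp_comp _ 2), h.integral_eq]
  simp only [Pi.pow_apply, hsq]
  rw [integral_add ((h.integrable_comp fun n => (n.choose 2 : ℝ)).const_mul 2)
    (h.integrable_comp fun n => (n : ℝ)), integral_const_mul, h.integral_choose, h.integral_eq,
    two_mul_prod_one_add_C_mul_X_coeff_two]
  ring

theorem integral_exp_mul_sub (h : IsBernoulliSum P c w) (u m : ℝ) :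
    ∫ ω, exp (u * (c ω - m)) ∂P = exp (-(u * m)) * ∏ i, (1 + (exp u - 1) * w i) := by
  rw [← h.integral_one_add_pow, ← integral_const_mul]
  refine integral_congr_ae (.of_forall fun ω => ?_)
  simp only
  rw [add_sub_cancel, ← exp_nat_mul, ← exp_add]
  congr 1
  ring

theorem exp_le_integral_exp (h : IsBernoulliSum P c w) {u : ℝ} (hu : 0 ≤ u) :
    exp ((exp (-u) - 1 + u) * (∑ i, w i - ∑ i, w i ^ 2)) ≤
      ∫ ω, exp (u * (c ω - ∑ i, w i)) ∂P := by
  have hprod := Finset.prod_le_prod (s := Finset.univ) (fun _ _ => (exp_pos _).le)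
    fun i _ => exp_le_one_add_exp_sub_one_mul (h.mem_Icc i) hu
  rw [prod_exp_mul_add] at hprod
  rwa [h.integral_exp_mul_sub, exp_neg (u * _), ← div_eq_inv_mul, le_div_iff₀' (exp_pos _)]

theorem integral_exp_le_exp (h : IsBernoulliSum P c w) {u : ℝ} (hu : 0 ≤ u) :
    ∫ ω, exp (u * (c ω - ∑ i, w i)) ∂P ≤
      exp ((exp u - 1 - u) * (∑ i, w i - ∑ i, w i ^ 2)) := by
  have hprod := Finset.prod_le_prod (s := Finset.univ)
    (fun i _ => (one_add_exp_sub_one_mul_pos (h.mem_Icc i)).le)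
    fun i _ => one_add_exp_sub_one_mul_le_exp (h.mem_Icc i) hu
  rw [prod_exp_mul_add] at hprod
  rwa [h.integral_exp_mul_sub, exp_neg (u * _), ← div_eq_inv_mul, div_le_iff₀' (exp_pos _)]

theorem sq_exp_sub_exp_mul_exp_le_measureReal [IsProbabilityMeasure P] (h : IsBernoulliSum P c w)
    {t x : ℝ} (ht : 0 < t) (hx : t * x ≤ (exp (-t) - 1 + t) * (∑ i, w i - ∑ i, w i ^ 2)) :
    (exp ((exp (-t) - 1 + t) * (∑ i, w i - ∑ i, w i ^ 2)) - exp (t * x)) ^ 2 *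
        exp (-((exp (2 * t) - 1 - 2 * t) * (∑ i, w i - ∑ i, w i ^ 2))) ≤
      P.real {ω | x < c ω - ∑ i, w i} := by
  have hfirst := h.exp_le_integral_exp ht.le
  have hsecond : ∫ ω, exp (t * (c ω - ∑ i, w i)) ^ 2 ∂P ≤
      exp ((exp (2 * t) - 1 - 2 * t) * (∑ i, w i - ∑ i, w i ^ 2)) := by
    simp only [← exp_nat_mul, ← mul_assoc, Nat.cast_ofNat]
    exact h.integral_exp_le_exp (by positivity)
  have hsecond_pos : 0 < ∫ ω, exp (t * (c ω - ∑ i, w i)) ^ 2 ∂P := by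
    simp only [← exp_nat_mul, ← mul_assoc, Nat.cast_ofNat]
    exact (exp_pos _).trans_le (h.exp_le_integral_exp (by positivity))
  have hset : {ω | x < c ω - ∑ i, w i} = {ω | exp (t * x) < exp (t * (c ω - ∑ i, w i))} := by
    ext ω
    simp only [Set.mem_ofPred_eq, exp_lt_exp, mul_lt_mul_iff_right₀ ht]
  have hTle : exp (t * x) ≤ exp ((exp (-t) - 1 + t) * (∑ i, w i - ∑ i, w i ^ 2)) :=
    exp_le_exp.mpr hx
  rw [exp_neg ((exp (2 * t) - 1 - 2 * t) * _), ← div_eq_mul_inv, hset]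
  have hmeasurable : Measurable fun ω => exp (t * (c ω - ∑ i, w i)) :=
    (measurable_from_nat (f := fun n : ℕ => exp (t * (n - ∑ i, w i)))).comp h.measurable
  refine le_trans ?_ (sq_integral_sub_div_le_measureReal hmeasurable
    (h.memLp_comp (fun n => exp (t * (n - ∑ i, w i))) 2) (exp_pos _).le (hTle.trans hfirst))
  have := sub_nonneg.mpr hTle
  gcongr

end IsBernoulliSum

end BernoulliSums

section Numerics

-- The Chernoff parameter is `t = 1 / 120`: the deviation `v / 256` needs `t / 256 < t² / 2`, and
-- the exponent `5 / 2 ^ 19` needs `t² / π² < 5 / 2 ^ 19`, so `t` must lie roughly in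
-- `(1 / 128, 1 / 103)`.
theorem le_exp_neg_sub_one_add : 0.99 * (1 / 120) ^ 2 / 2 ≤ exp (-(1 / 120)) - 1 + 1 / 120 := by
  have hbound := (abs_le.mp (exp_bound (x := -(1 / 120)) (n := 3)
    (by norm_num [abs_of_nonneg]) (by norm_num))).1
  norm_num [Finset.sum_range_succ, Nat.factorial, abs_of_nonneg] at hbound
  norm_num
  linarith

theorem exp_sub_one_sub_le : exp (2 * (1 / 120)) - 1 - 2 * (1 / 120) ≤ 2.02 * (1 / 120) ^ 2 := by
  have hbound := (abs_le.mp (exp_bound (x := 2 * (1 / 120)) (n := 3)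
    (by norm_num [abs_of_nonneg]) (by norm_num))).2
  norm_num [Finset.sum_range_succ, Nat.factorial, abs_of_nonneg] at hbound
  norm_num
  linarith

theorem eventually_exp_mul_le_mul_exp_mul {κ b c : ℝ} (hκ : 0 < κ) (hbc : b < c) :
    ∀ᶠ x in atTop, exp (b * x) ≤ κ * exp (c * x) := by
  filter_upwards [eventually_ge_atTop (-log κ / (c - b))] with x hx
  rw [div_le_iff₀ (sub_pos.mpr hbc)] at hx
  calc exp (b * x) ≤ exp (log κ + c * x) := exp_le_exp.mpr (by linarith)
    _ = κ * exp (c * x) := by rw [exp_add, exp_log hκ]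

theorem eventually_exp_log_le {κ : ℝ} (hκ : 0 < κ) :
    ∀ᶠ N : ℕ in atTop, exp (-(5 / 2 ^ 19) * log (exp 1 ^ 3 * N)) ≤
      κ * exp (-(1.03 * (1 / 120) ^ 2 * (2 + log N / π ^ 2))) := by
  have hκ' : 0 < κ * exp (-(1.03 * (1 / 120) ^ 2 * 2)) := by positivity
  have hlog : Tendsto (fun N : ℕ => log N) atTop atTop :=
    tendsto_log_atTop.comp tendsto_natCast_atTop_atTop
  filter_upwards [hlog.eventually (eventually_exp_mul_le_mul_exp_mul
    (b := -(5 / 2 ^ 19)) (c := -(1.03 * (1 / 120) ^ 2 / 9)) hκ' (by norm_num)),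
    eventually_ge_atTop 1] with N hN hN1
  have hdiv : log N / π ^ 2 ≤ log N / 9 :=
    div_le_div_of_nonneg_left (log_natCast_nonneg N) (by norm_num) (by nlinarith [pi_gt_three])
  calc exp (-(5 / 2 ^ 19) * log (exp 1 ^ 3 * N))
      ≤ exp (-(5 / 2 ^ 19) * log N) := by
        rw [exp_le_exp, log_mul (by positivity) (by positivity), log_pow, log_exp]
        norm_num
    _ ≤ κ * exp (-(1.03 * (1 / 120) ^ 2 * 2)) * exp (-(1.03 * (1 / 120) ^ 2 / 9) * log N) := hN
    _ ≤ κ * exp (-(1.03 * (1 / 120) ^ 2 * (2 + log N / π ^ 2))) := by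
        rw [mul_assoc, ← exp_add]
        gcongr
        linarith

end Numerics

theorem IsBernoulliSum.sq_mul_exp_le_measureReal_variance {Ω ι : Type*} [MeasurableSpace Ω]
    [Fintype ι] {P : Measure Ω} [IsProbabilityMeasure P] {c : Ω → ℕ} {w : ι → ℝ}
    (h : IsBernoulliSum P c w) {q : ℝ} (hq : 0 ≤ q)
    (hqv : q ≤ ProbabilityTheory.variance (fun ω => (c ω : ℝ)) P) :
    (1 - exp (-(q / 10 ^ 6))) ^ 2 *
        exp (-(1.03 * (1 / 120) ^ 2 * ProbabilityTheory.variance (fun ω => (c ω : ℝ)) P)) ≤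
      P.real {ω | ProbabilityTheory.variance (fun ω => (c ω : ℝ)) P / 256 < c ω - ∑ i, w i} := by
  set v := ProbabilityTheory.variance (fun ω => (c ω : ℝ)) P with hv_def
  have hv : 0 ≤ v := hq.trans hqv
  set α := exp (-(1 / 120)) - 1 + 1 / 120 with hα_def
  set β := exp (2 * (1 / 120)) - 1 - 2 * (1 / 120) with hβ_def
  have hα : 1 / 120 / 256 + 1 / 10 ^ 6 ≤ α := le_trans (by norm_num) le_exp_neg_sub_one_add
  have hαβ : β - 2 * α ≤ 1.03 * (1 / 120) ^ 2 := by
    linarith [le_exp_neg_sub_one_add, exp_sub_one_sub_le]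
  have hexponent : 1 / 120 * (v / 256) + q / 10 ^ 6 ≤ α * v := by
    linarith [mul_le_mul_of_nonneg_right hα hv]
  have htail := h.sq_exp_sub_exp_mul_exp_le_measureReal (t := 1 / 120) (x := v / 256)
    (by norm_num)
  rw [← h.variance_eq, ← hv_def, ← hα_def, ← hβ_def] at htail
  refine le_trans ?_ (htail (by linarith [div_nonneg hq (by norm_num : (0 : ℝ) ≤ 10 ^ 6)]))
  have hfactor : exp (α * v) * (1 - exp (-(q / 10 ^ 6))) ≤
      exp (α * v) - exp (1 / 120 * (v / 256)) := by
    rw [mul_sub, mul_one, ← exp_add]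
    gcongr
    linarith
  have hfactor_nonneg : 0 ≤ 1 - exp (-(q / 10 ^ 6)) :=
    sub_nonneg.mpr (exp_le_one_iff.mpr (neg_nonpos.mpr (by positivity)))
  calc (1 - exp (-(q / 10 ^ 6))) ^ 2 * exp (-(1.03 * (1 / 120) ^ 2 * v))
      ≤ (1 - exp (-(q / 10 ^ 6))) ^ 2 * exp (-((β - 2 * α) * v)) := by gcongr
    _ = (exp (α * v) * (1 - exp (-(q / 10 ^ 6)))) ^ 2 * exp (-(β * v)) := by
        rw [mul_pow, ← exp_nat_mul, mul_right_comm, ← exp_add, mul_comm]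
        congr 2
        push_cast
        ring
    _ ≤ (exp (α * v) - exp (1 / 120 * (v / 256))) ^ 2 * exp (-(β * v)) := by gcongr

section ArcCount

variable {N : ℕ} {a L : ℝ}

theorem exists_isBernoulliSum_countAngles (ℙ : Measure (unitaryGroup (Fin N) ℂ))
    [IsProbabilityMeasure ℙ] [ℙ.IsMulLeftInvariant] (hN : 0 < N) (ha : 0 ≤ a)
    (haL : a + L ≤ 2 * π) (hL : 0 ≤ L) (hL' : L < 2 * π) :
    ∃ w : Fin N → ℝ, IsBernoulliSum ℙ (fun U => countAngles N U (Set.Ico a (a + L))) w ∧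
      ∑ i, w i = N * (L / (2 * π)) ∧ ∑ i, w i - ∑ i, w i ^ 2 = arcVariance N a L := by
  have hint : Integrable ((circleArc a L).indicator (1 : AddCircle (2 * π) → ℝ))
      AddCircle.haarAddCircle := (integrable_const 1).indicator (measurableSet_circleArc hL')
  obtain ⟨w, hw, hdet, hsum, hsq⟩ := exists_prod_eq_det_one_add_smul_fourierToeplitz (N := N) hint
    (fun x => Set.indicator_nonneg (fun _ _ => zero_le_one) x)
    (fun x => Set.indicator_le_self' (fun _ _ => zero_le_one) x)
  simp only [ofReal_indicator_one] at hdet hsum hsq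
  rw [fourierCoeff_indicator_circleArc_zero hL hL'.le] at hsum
  have hmean : ∑ i, w i = N * (L / (2 * π)) := by exact_mod_cast hsum
  have hgenerating (s : ℝ) :
      ∫ U, (1 + s) ^ countAngles N U (Set.Ico a (a + L)) ∂ℙ = ∏ i, (1 + s * w i) := by
    have hcomplex := integral_one_add_pow_countAngles ℙ hN ha haL hL hL' (s : ℂ)
    rw [hdet] at hcomplex
    refine Complex.ofReal_injective ?_
    rw [← integral_complex_ofReal]
    exact_mod_cast hcomplex
  refine ⟨w, ⟨measurable_countAngles ℙ hN ha haL hL hL', fun U => ?_, hw, hgenerating⟩, hmean, ?_⟩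
  · simpa using countAngles_le U (Set.Ico a (a + L))
  · rw [hmean, hsq, arcVariance]

theorem setOf_div_mul_lt_div_sub_eq {Ω : Type*} (hN : 0 < N) (c : Ω → ℝ) (v d x : ℝ) :
    {ω | v / (d * N) < c ω / N - x} = {ω | v / d < c ω - N * x} := by
  have hN' : (0 : ℝ) < N := Nat.cast_pos.mpr hN
  ext ω
  simp only [Set.mem_ofPred_eq]
  rw [← div_div, div_lt_iff₀ hN', sub_mul, div_mul_cancel₀ _ hN'.ne', mul_comm x]

end ArcCount

end HaarUnitary

open HaarUnitary

/-- For all sufficiently large `N`: for a Haar-distributed `N × N` unitary matrix and any arc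
`I ⊆ [0, 2π)` of length `N^{-1/2}`,
`P[μ_N(I) − ν(I) > Var(𝒩_I)/(256N)] ≥ exp(−(5/2¹⁹) log(e³N))`. -/
theorem lower_tail_bound_for_arcs :
    ∃ N₀ : ℕ, ∀ N : ℕ, N₀ ≤ N →
      ∀ ℙ : Measure (Matrix.unitaryGroup (Fin N) ℂ),
        IsProbabilityMeasure ℙ → ℙ.IsHaarMeasure →
        ∀ a : ℝ, 0 ≤ a → a + (Real.sqrt N)⁻¹ ≤ 2 * π →
          Real.exp (-(5 / 2 ^ 19) * Real.log (Real.exp 1 ^ 3 * N)) ≤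
            (ℙ {U | ProbabilityTheory.variance
                  (fun V => (countAngles N V (Set.Ico a (a + (Real.sqrt N)⁻¹)) : ℝ)) ℙ /
                    (256 * N) <
                (countAngles N U (Set.Ico a (a + (Real.sqrt N)⁻¹)) : ℝ) / N -
                  (Real.sqrt N)⁻¹ / (2 * π)}).toReal := by
  have hκ : 0 < (1 - exp (-(1 / (32 * π ^ 2) / 10 ^ 6))) ^ 2 :=
    pow_pos (sub_pos.mpr (exp_lt_one_iff.mpr (neg_lt_zero.mpr (by positivity)))) 2
  obtain ⟨N₀, hN₀⟩ := eventually_atTop.mp ((eventually_ge_atTop 2).and (eventually_exp_log_le hκ))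
  refine ⟨N₀, fun N hN ℙ _ _ a ha haL => ?_⟩
  obtain ⟨hN2, hexp⟩ := hN₀ N hN
  have hlength : (√N)⁻¹ < 2 * π :=
    (inv_le_one_of_one_le₀ (one_le_sqrt.mpr (Nat.one_le_cast.mpr (by lia)))).trans_lt
      (by linarith [pi_gt_three])
  obtain ⟨w, hw, hmean, hspread⟩ :=
    exists_isBernoulliSum_countAngles ℙ (by lia) ha haL (by positivity) hlength
  have hvar := hw.variance_eq.trans hspread
  have hvar_lower := (le_arcVariance_inv_sqrt (by lia)).trans_eq hvar.symm
  have hvar_upper := hvar.trans_le (arcVariance_inv_sqrt_le hN2)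
  rw [setOf_div_mul_lt_div_sub_eq (by lia), ← hmean]
  refine (hexp.trans ?_).trans (hw.sq_mul_exp_le_measureReal_variance (by positivity) hvar_lower)
  gcongr
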